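/- Let m ≥ 2, λ = (m−2)/2, and let M_k be a Cl_{0,m}⊗ℂ-valued homogeneous polynomial of degree k with ∂_x M_k = 0. Define ψ_{2j,k}(x) = L_j^{m/2+k−1}(|x|²) M_k(x) e^{−|x|²/2} and ψ_{2j+1,k}(x) = L_j^{m/2+k}(|x|²) x M_k(x) e^{−|x|²/2}, where L_j^α is the generalized Laguerre polynomial. Then the Clifford–Fourier transform F_− f(y) = (2π)^{−m/2}∫_{ℝ^m}K_−(x,y)f(x)dx satisfies the eigenvalue equations: F_−(ψ_{2j,k}) = (−1)^{j+k} ψ_{2j,k} and F_−(ψ_{2j+1,k}) = i^m (−1)^{j+1} ψ_{2j+1,k}. -/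

import Mathlib

open scoped BigOperators
open MeasureTheory

noncomputable section

namespace CliffordFourier

/-- Concrete model of the complexified Clifford algebra `Cl_{0,m} ⊗ ℂ`:
an element is the family of its complex coefficients on the canonical basis
`e_S = e_{i₁} ⋯ e_{i_k}` (for `S = {i₁ < … < i_k} ⊆ {0,…,m-1}`). -/
def Cl (m : ℕ) : Type := Finset (Fin m) → ℂ

variable {m : ℕ}

instance : NormedAddCommGroup (Cl m) :=
  inferInstanceAs (NormedAddCommGroup (Finset (Fin m) → ℂ))
instance : NormedSpace ℝ (Cl m) :=
  inferInstanceAs (NormedSpace ℝ (Finset (Fin m) → ℂ))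
instance : Module ℂ (Cl m) := inferInstanceAs (Module ℂ (Finset (Fin m) → ℂ))
instance : CompleteSpace (Cl m) := inferInstanceAs (CompleteSpace (Finset (Fin m) → ℂ))

/-- The coefficient of `a` on the basis element `e_S`. -/
def coeff (a : Cl m) : Finset (Fin m) → ℂ := a

/-- Build an element of the Clifford algebra from its coefficients. -/
def ofCoeff (f : Finset (Fin m) → ℂ) : Cl m := f

/-- `1 = e_∅`. -/
instance : One (Cl m) := ⟨ofCoeff fun S => if S = (∅ : Finset (Fin m)) then 1 else 0⟩

/-- Clifford multiplication, determined by the relations `e_i e_j = - e_j e_i` (`i ≠ j`)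
and `e_i² = -1`; on basis elements it is given by
`e_T · e_U = (-1)^{#{(t,u) ∈ T×U : u < t}} · (-1)^{#(T∩U)} · e_{T Δ U}`. -/
instance : Mul (Cl m) :=
  ⟨fun a b => ofCoeff fun S => ∑ T : Finset (Fin m),
    ((-1 : ℂ) ^ ((((T ×ˢ (symmDiff T S)).filter fun p : Fin m × Fin m => p.2 < p.1).card)
        + (T ∩ (symmDiff T S)).card))
      * coeff a T * coeff b (symmDiff T S)⟩

/-- The generator `e_i`. -/
def e (m : ℕ) (i : Fin m) : Cl m := ofCoeff fun S => if S = {i} then 1 else 0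

/-- The embedding of a vector `x ∈ ℝ^m` as `x = Σ_i x_i e_i` in the Clifford algebra. -/
def vec (m : ℕ) (x : Fin m → ℝ) : Cl m := ∑ i : Fin m, (x i : ℂ) • e m i

/-- The Euclidean inner product `⟨x,y⟩ = Σ_i x_i y_i`. -/
def ip (x y : Fin m → ℝ) : ℝ := ∑ i, x i * y i

/-- The Euclidean norm `|x|`. -/
def nrm (x : Fin m → ℝ) : ℝ := Real.sqrt (ip x x)

/-- The wedge product `x∧y = Σ_{j<k} e_j e_k (x_j y_k - x_k y_j)`. -/
def wedge (m : ℕ) (x y : Fin m → ℝ) : Cl m :=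
  ∑ j : Fin m, ∑ k : Fin m,
    if j < k then ((x j * y k - x k * y j : ℝ) : ℂ) • (e m j * e m k) else 0

/-- Complex conjugation of the coefficients. -/
def cconj (a : Cl m) : Cl m := ofCoeff fun S => starRingEnd ℂ (coeff a S)

/-- The partial derivative `∂_{x_i}` of a Clifford-algebra-valued function. -/
def pder (i : Fin m) (f : (Fin m → ℝ) → Cl m) : (Fin m → ℝ) → Cl m :=
  fun x => fderiv ℝ f x (Pi.single i 1)

/-- The Dirac operator `∂_x = Σ_i e_i ∂_{x_i}`. -/
def dirac (f : (Fin m → ℝ) → Cl m) : (Fin m → ℝ) → Cl m :=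
  fun x => ∑ i : Fin m, e m i * pder i f x

/-- The Euler operator `E = Σ_i x_i ∂_{x_i}`. -/
def euler (f : (Fin m → ℝ) → Cl m) : (Fin m → ℝ) → Cl m :=
  fun x => ∑ i : Fin m, x i • pder i f x

/-- The Laplacian `Δ = Σ_i ∂_{x_i}²`. -/
def lapl (f : (Fin m → ℝ) → Cl m) : (Fin m → ℝ) → Cl m :=
  fun x => ∑ i : Fin m, pder i (pder i f) x

/-- The Gegenbauer polynomial `C_k^λ(w)`, defined through the standard three-term
recurrence, equivalent to the generating function `(1-2wt+t²)^{-λ} = Σ_k C_k^λ(w) t^k`. -/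
def geg (lam : ℝ) : ℕ → ℝ → ℝ
  | 0, _ => 1
  | 1, w => 2 * lam * w
  | (k+2), w => (2 * ((k : ℝ) + 1 + lam) * w * geg lam (k+1) w
      - ((k : ℝ) + 2 * lam) * geg lam k w) / ((k : ℝ) + 2)

/-- The entire function `J̃_a(t) = t^{-a} J_a(t) = Σ_{j≥0} (-1)^j (t/2)^{2j} / (j! Γ(j+a+1) 2^a)`
(for `t > 0` this is literally `t^{-a} J_a(t)`). -/
def besselJt (a t : ℝ) : ℝ :=
  ∑' j : ℕ, ((-1 : ℝ)^j * (t/2) ^ (2*j)) / (j.factorial * Real.Gamma ((j : ℝ) + a + 1) * (2:ℝ)^a)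

/-- The renormalized Gegenbauer polynomial `((k+λ)/λ) C_k^λ = C_k^{λ+1} - C_{k-2}^{λ+1}`
(the right-hand side also makes sense for `λ = 0`, i.e. `m = 2`). -/
def gegT (lam : ℝ) (k : ℕ) (w : ℝ) : ℝ :=
  geg (lam + 1) k w - (if 2 ≤ k then geg (lam + 1) (k - 2) w else 0)

/-- `A_λ(w,z) = 2^{λ-1} Γ(λ+1) Σ_{k≥0} (u + (-1)^k) z^{-λ} J_{k+λ}(z) C_k^λ(w)`, where `u = i^m`;
here written using `z^{-λ} J_{k+λ}(z) = z^k J̃_{k+λ}(z)`, which makes the formula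
well defined for all `z ≥ 0` (and all `m ≥ 2`). -/
def AfunR (u : ℂ) (lam w z : ℝ) : ℂ :=
  (((2:ℝ)^(lam - 1) * Real.Gamma (lam + 1) : ℝ) : ℂ) *
    ∑' k : ℕ, (u + (-1 : ℂ)^k) * ((z^k * besselJt ((k : ℝ) + lam) z * geg lam k w : ℝ) : ℂ)

/-- `B_λ(w,z) = -2^{λ-1} Γ(λ) Σ_{k≥0} (k+λ)(u - (-1)^k) z^{-λ} J_{k+λ}(z) C_k^λ(w)`;
here written using `Γ(λ)(k+λ)C_k^λ = Γ(λ+1)(C_k^{λ+1} - C_{k-2}^{λ+1})` and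
`z^{-λ} J_{k+λ}(z) = z^k J̃_{k+λ}(z)`, which makes the formula well defined
for all `z ≥ 0` and all `m ≥ 2` (including `λ = 0`). -/
def BfunR (u : ℂ) (lam w z : ℝ) : ℂ :=
  -(((2:ℝ)^(lam - 1) * Real.Gamma (lam + 1) : ℝ) : ℂ) *
    ∑' k : ℕ, (u - (-1 : ℂ)^k) * ((z^k * besselJt ((k : ℝ) + lam) z * gegT lam k w : ℝ) : ℂ)

/-- `C_λ(w,z) = -2^{λ-1} Γ(λ) Σ_{k≥0} (u + (-1)^k) z^{-λ-1} J_{k+λ}(z) (C_k^λ)'(w)`;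
here written using `Γ(λ) (C_k^λ)' = 2 Γ(λ+1) C_{k-1}^{λ+1}` and
`z^{-λ-1} J_{k+λ}(z) = z^{k-1} J̃_{k+λ}(z)`, which makes the formula well defined
for all `z ≥ 0` and all `m ≥ 2` (including `λ = 0`). -/
def CfunR (u : ℂ) (lam w z : ℝ) : ℂ :=
  -(((2:ℝ)^lam * Real.Gamma (lam + 1) : ℝ) : ℂ) *
    ∑' k : ℕ, (u + (-1 : ℂ)^k) *
      ((z^(k - 1) * besselJt ((k : ℝ) + lam) z
        * (if 1 ≤ k then geg (lam + 1) (k - 1) w else 0) : ℝ) : ℂ)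

/-- The Clifford-Fourier kernel
`K_-(x,y) = A_λ(w,z) + B_λ(w,z) + (x∧y) C_λ(w,z)`
with `λ = (m-2)/2`, `z = |x||y|`, `w = ⟨x,y⟩/(|x||y|)`. -/
def Kminus (m : ℕ) (x y : Fin m → ℝ) : Cl m :=
  (AfunR (Complex.I ^ m) (((m:ℝ) - 2)/2) (ip x y / (nrm x * nrm y)) (nrm x * nrm y)
    + BfunR (Complex.I ^ m) (((m:ℝ) - 2)/2) (ip x y / (nrm x * nrm y)) (nrm x * nrm y)) • (1 : Cl m)
  + CfunR (Complex.I ^ m) (((m:ℝ) - 2)/2) (ip x y / (nrm x * nrm y)) (nrm x * nrm y) • wedge m x y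

/-- The generalized Laguerre polynomial
`L_j^a(t) = Σ_{i=0}^j (-1)^i binom(j+a, j-i) t^i / i!`,
with `binom(j+a, j-i) = Γ(j+a+1)/(Γ(i+a+1) (j-i)!)`. -/
def lag (a : ℝ) (j : ℕ) (t : ℝ) : ℝ :=
  ∑ i ∈ Finset.range (j + 1),
    (-1 : ℝ)^i * (Real.Gamma ((j:ℝ) + a + 1) / (Real.Gamma ((i:ℝ) + a + 1) * ((j - i).factorial : ℝ)))
      * t^i / (i.factorial : ℝ)

/-!
Expanding the Bessel functions turns `K_-(x, y)` into the double series
`∑_{k,s} c_{k,s} (|x|²|y|²)^s S_k(x, y)`, where `S_k(·, y)` is a Clifford-valued polynomial,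
homogeneous of degree `k`, built from the reproducing kernels of spherical monogenics. By the
Funk–Hecke theorem, integrating `S_k(·, y)` against a monogenic `M` of degree `l`, or against
`x M(x)`, with a Gaussian weight gives zero unless `k` is the degree of the function, and a known
multiple of its value at `y` otherwise. Euler's identity raises this to all even moments, so that
only the sum over `s` survives in the transform of a Laguerre function. That sum is the Hankel
transform formula `∑_s … = (-1)^j L_j^a(t) e^{-t/2}` with `t = |y|²`, a finite identity between
Laguerre coefficients.
-/

section EigenfunctionProof

open scoped ContDiff

/-! ### The Clifford algebra is a ring -/

section FiniteSums

lemma prod_symmDiff_of_mul_self_eq_one {ι R : Type*} [DecidableEq ι] [CommMonoid R] {f : ι → R}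
    (hf : ∀ i, f i * f i = 1) (S T : Finset ι) :
    ∏ i ∈ symmDiff S T, f i = (∏ i ∈ S, f i) * ∏ i ∈ T, f i := by
  have hinter : (∏ i ∈ S ∩ T, f i) * ∏ i ∈ S ∩ T, f i = 1 := by
    simp_rw [← Finset.prod_mul_distrib, hf, Finset.prod_const_one]
  have hS := Finset.prod_inter_mul_prod_sdiff S T f
  have hT := Finset.prod_inter_mul_prod_sdiff T S f
  rw [Finset.inter_comm] at hT
  rw [symmDiff_def, Finset.sup_eq_union, Finset.prod_union disjoint_sdiff_sdiff, ← hS, ← hT,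
    mul_mul_mul_comm, hinter, one_mul]

lemma sum_sum_eq_sum_diag_add_sum_lt {ι V : Type*} [Fintype ι] [LinearOrder ι] [AddCommMonoid V]
    (F : ι → ι → V) :
    ∑ i, ∑ j, F i j = ∑ i, F i i + ∑ i, ∑ j, if i < j then F i j + F j i else 0 := by
  have hsplit : ∀ i j, F i j =
      (if i = j then F i j else 0) + ((if i < j then F i j else 0) + if j < i then F i j else 0) :=
    fun i j => by
      rcases lt_trichotomy i j with h | h | h
      · simp [h, h.ne, h.not_gt]
      · simp [h]
      · simp [h, h.ne', h.not_gt]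
  have hswap : ∑ i, ∑ j, (if j < i then F i j else 0) = ∑ i, ∑ j, if i < j then F j i else 0 :=
    Finset.sum_comm
  calc ∑ i, ∑ j, F i j
      = ∑ i, F i i + (∑ i, ∑ j, (if i < j then F i j else 0)
          + ∑ i, ∑ j, if j < i then F i j else 0) := by
        simp_rw [← Finset.sum_add_distrib]
        refine Finset.sum_congr rfl fun i _ => ?_
        rw [Finset.sum_congr rfl fun j _ => hsplit i j, Finset.sum_add_distrib]
        simp
    _ = _ := by
        simp_rw [hswap, ← Finset.sum_add_distrib, ite_add_ite, add_zero]

end FiniteSums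

/-- The sign in `e_S e_T = sign S T • e_{S ∆ T}`: moving each `e_t` to its place costs a factor
`-1` for every larger index it passes, and one more when it meets its own copy. -/
def sign (S T : Finset (Fin m)) : ℂ := ∏ s ∈ S, ∏ t ∈ T, if t ≤ s then -1 else 1

lemma neg_one_pow_card_filter {ι : Type*} (S : Finset ι) (p : ι → Prop) [DecidablePred p] :
    (-1 : ℂ) ^ (S.filter p).card = ∏ s ∈ S, if p s then -1 else 1 := by
  simp [Finset.prod_ite]

lemma neg_one_pow_card_add_card_eq_sign (S T : Finset (Fin m)) :
    (-1 : ℂ) ^ (((S ×ˢ T).filter fun p : Fin m × Fin m => p.2 < p.1).card + (S ∩ T).card) =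
      sign S T := by
  have hmem : ∀ s, (if s ∈ T then (-1 : ℂ) else 1) = ∏ t ∈ T, if t = s then -1 else 1 :=
    fun s => by rw [Finset.prod_ite_eq']
  rw [pow_add, ← Finset.filter_mem_eq_inter, neg_one_pow_card_filter, neg_one_pow_card_filter,
    Finset.prod_product, ← Finset.prod_mul_distrib]
  refine Finset.prod_congr rfl fun s _ => ?_
  rw [hmem, ← Finset.prod_mul_distrib]
  refine Finset.prod_congr rfl fun t _ => ?_
  rcases lt_trichotomy t s with h | h | h
  · simp [h, h.le, h.ne]
  · simp [h]
  · simp [h.not_gt, h.not_ge, h.ne']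

lemma sign_bot_left (T : Finset (Fin m)) : sign ⊥ T = 1 := Finset.prod_empty

lemma sign_bot_right (S : Finset (Fin m)) : sign S ⊥ = 1 :=
  Finset.prod_eq_one fun _ _ => Finset.prod_empty

lemma sign_symmDiff_left (S T U : Finset (Fin m)) :
    sign (symmDiff S T) U = sign S U * sign T U :=
  prod_symmDiff_of_mul_self_eq_one
    (fun s => by
      rw [← Finset.prod_mul_distrib]
      exact Finset.prod_eq_one fun t _ => by split_ifs <;> norm_num) S T

lemma sign_symmDiff_right (S T U : Finset (Fin m)) :
    sign S (symmDiff T U) = sign S T * sign S U := by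
  rw [sign, sign, sign, ← Finset.prod_mul_distrib]
  exact Finset.prod_congr rfl fun s _ =>
    prod_symmDiff_of_mul_self_eq_one (fun t => by split_ifs <;> norm_num) T U

lemma Cl.ext {a b : Cl m} (h : ∀ S, coeff a S = coeff b S) : a = b := funext h

lemma coeff_mul (a b : Cl m) (S : Finset (Fin m)) :
    coeff (a * b) S = ∑ T, sign T (symmDiff T S) * coeff a T * coeff b (symmDiff T S) := by
  simp_rw [← neg_one_pow_card_add_card_eq_sign]
  rfl

lemma coeff_add (a b : Cl m) (S : Finset (Fin m)) : coeff (a + b) S = coeff a S + coeff b S := rfl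

lemma coeff_neg (a : Cl m) (S : Finset (Fin m)) : coeff (-a) S = -coeff a S := rfl

lemma coeff_smul (c : ℂ) (a : Cl m) (S : Finset (Fin m)) : coeff (c • a) S = c * coeff a S := rfl

lemma coeff_one (S : Finset (Fin m)) : coeff (1 : Cl m) S = if S = ∅ then 1 else 0 := rfl

lemma coeff_e (i : Fin m) (S : Finset (Fin m)) : coeff (e m i) S = if S = {i} then 1 else 0 := rfl

protected lemma Cl.mul_assoc (a b c : Cl m) : a * b * c = a * (b * c) := Cl.ext fun S => by
  simp_rw [coeff_mul, Finset.mul_sum, Finset.sum_mul]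
  rw [Finset.sum_comm]
  refine Finset.sum_congr rfl fun R _ => ?_
  refine Fintype.sum_equiv (symmDiff_right_involutive R).toPerm _ _ fun T => ?_
  have hcancel : symmDiff (symmDiff R T) (symmDiff R S) = symmDiff T S := by
    rw [symmDiff_symmDiff_symmDiff_comm, symmDiff_self, bot_symmDiff]
  have hsign : sign R (symmDiff R S) * sign (symmDiff R T) (symmDiff T S) =
      sign T (symmDiff T S) * sign R (symmDiff R T) := by
    rw [sign_symmDiff_left, ← mul_assoc, ← sign_symmDiff_right, mul_comm (sign T _)]
    congr 2
    rw [symmDiff_symmDiff_symmDiff_comm, symmDiff_comm S, symmDiff_assoc, symmDiff_self,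
      symmDiff_bot]
  change _ = sign R (symmDiff R S) * coeff a R *
    (sign (symmDiff R T) (symmDiff (symmDiff R T) (symmDiff R S)) * coeff b (symmDiff R T) *
      coeff c (symmDiff (symmDiff R T) (symmDiff R S)))
  rw [hcancel]
  linear_combination (coeff a R * coeff b (symmDiff R T) * coeff c (symmDiff T S)) * -hsign

/-- The ring structure of the Clifford algebra. It is only a local instance below: as a global
one it would compete with the normed group structure for the addition and the zero of `Cl m`. -/
abbrev Cl.ring : Ring (Cl m) where
  __ := (inferInstance : AddCommGroup (Cl m))
  mul := (· * ·)
  one := 1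
  mul_assoc := Cl.mul_assoc
  left_distrib a b c := Cl.ext fun S => by
    simp [coeff_mul, coeff_add, mul_add, Finset.sum_add_distrib]
  right_distrib a b c := Cl.ext fun S => by
    simp [coeff_mul, coeff_add, mul_add, add_mul, Finset.sum_add_distrib]
  zero_mul a := Cl.ext fun S => by
    rw [coeff_mul]
    exact Finset.sum_eq_zero fun T _ => by rw [show coeff (0 : Cl m) T = 0 from rfl]; ring
  mul_zero a := Cl.ext fun S => by
    rw [coeff_mul]
    exact Finset.sum_eq_zero fun T _ => by rw [show coeff (0 : Cl m) _ = 0 from rfl]; ring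
  one_mul a := Cl.ext fun S => by
    rw [coeff_mul, Finset.sum_eq_single ∅] <;>
      simp +contextual [coeff_one, sign_bot_left, ← Finset.bot_eq_empty, bot_symmDiff]
  mul_one a := Cl.ext fun S => by
    rw [coeff_mul, Finset.sum_eq_single S] <;>
      simp +contextual [coeff_one, sign_bot_right, ← Finset.bot_eq_empty, symmDiff_eq_bot]

instance : IsScalarTower ℂ (Cl m) (Cl m) := ⟨fun c a b => Cl.ext fun S => by
  simp only [smul_eq_mul, coeff_mul, coeff_smul, Finset.mul_sum]
  exact Finset.sum_congr rfl fun T _ => by ring⟩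

instance : SMulCommClass ℂ (Cl m) (Cl m) := ⟨fun c a b => Cl.ext fun S => by
  simp only [smul_eq_mul, coeff_mul, coeff_smul, Finset.mul_sum]
  exact Finset.sum_congr rfl fun T _ => by ring⟩

instance : IsScalarTower ℝ ℂ (Cl m) := inferInstanceAs (IsScalarTower ℝ ℂ (Finset (Fin m) → ℂ))

instance : SMulCommClass ℝ ℂ (Cl m) := inferInstanceAs (SMulCommClass ℝ ℂ (Finset (Fin m) → ℂ))

lemma ofReal_smul (r : ℝ) (a : Cl m) : (r : ℂ) • a = r • a := by
  rw [← one_smul ℂ a, ← smul_assoc r, Complex.real_smul, mul_one, one_smul]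

instance : IsScalarTower ℝ (Cl m) (Cl m) := ⟨fun r a b => by
  simp_rw [smul_eq_mul, ← ofReal_smul, smul_mul_assoc]⟩

instance : SMulCommClass ℝ (Cl m) (Cl m) := ⟨fun r a b => by
  simp_rw [smul_eq_mul, ← ofReal_smul, mul_smul_comm]⟩

instance : FiniteDimensional ℝ (Cl m) :=
  inferInstanceAs (FiniteDimensional ℝ (Finset (Fin m) → ℂ))

variable (m) in
/-- Clifford multiplication as a continuous bilinear map over `ℝ`. -/
def mulL : Cl m →L[ℝ] Cl m →L[ℝ] Cl m :=
  letI := Cl.ring (m := m)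
  (LinearMap.mul ℝ (Cl m)).toContinuousBilinearMap

lemma mulL_apply (a b : Cl m) : mulL m a b = a * b := rfl

set_option maxSynthPendingDepth 3 in
variable (m) in
lemma exists_norm_mul_le : ∃ C, 0 ≤ C ∧ ∀ a b : Cl m, ‖a * b‖ ≤ C * ‖a‖ * ‖b‖ :=
  ⟨‖mulL m‖, norm_nonneg _, (mulL m).le_opNorm₂⟩

instance : NormedSpace ℂ (Cl m) where
  __ := (inferInstance : Module ℂ (Cl m))
  norm_smul_le := (inferInstance : NormedSpace ℂ (Finset (Fin m) → ℂ)).norm_smul_le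

attribute [local instance] Cl.ring

lemma coeff_e_mul_e (i j : Fin m) (S : Finset (Fin m)) :
    coeff (e m i * e m j) S =
      (if j ≤ i then -1 else 1) * if S = symmDiff {i} {j} then 1 else 0 := by
  rw [coeff_mul, Finset.sum_eq_single {i}]
  · rcases eq_or_ne S (symmDiff {i} {j}) with rfl | hS
    · simp [coeff_e, sign]
    · have hne : symmDiff {i} S ≠ {j} := fun h => hS (by rw [← h, symmDiff_symmDiff_cancel_left])
      simp [coeff_e, hS, hne]
  · intro T _ hT
    simp [coeff_e, hT]
  · simp

lemma e_mul_self (i : Fin m) : e m i * e m i = -1 := Cl.ext fun S => by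
  simp [coeff_e_mul_e, coeff_neg, coeff_one, symmDiff_self, neg_ite]

lemma e_mul_e_of_lt {i j : Fin m} (h : i < j) : e m j * e m i = -(e m i * e m j) :=
  Cl.ext fun S => by
    simp [coeff_e_mul_e, coeff_neg, symmDiff_comm {j}, h.le, h.not_ge, neg_ite]

lemma vec_eq_sum (x : Fin m → ℝ) : vec m x = ∑ i, x i • e m i := by
  simp_rw [vec, ofReal_smul]

lemma vec_mul_vec (x y : Fin m → ℝ) : vec m x * vec m y = wedge m x y - ip x y • 1 := by
  have hterm : ∀ i j : Fin m, x i • e m i * y j • e m j = (x i * y j) • (e m i * e m j) :=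
    fun i j => smul_mul_smul_comm _ _ _ _
  simp_rw [vec_eq_sum, Finset.sum_mul_sum, hterm]
  rw [sum_sum_eq_sum_diag_add_sum_lt, add_comm, sub_eq_add_neg]
  congr 1
  · refine Finset.sum_congr rfl fun i _ => Finset.sum_congr rfl fun j _ => ?_
    split_ifs with h
    · rw [e_mul_e_of_lt h, ofReal_smul]
      module
    · rfl
  · simp_rw [e_mul_self, ip, Finset.sum_smul, ← Finset.sum_neg_distrib, smul_neg]

lemma vec_mul_self (x : Fin m → ℝ) : vec m x * vec m x = -(ip x x • 1) := by
  have hwedge : wedge m x x = 0 :=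
    Finset.sum_eq_zero fun i _ => Finset.sum_eq_zero fun j _ => by simp [mul_comm]
  rw [vec_mul_vec, hwedge, zero_sub]

lemma wedge_eq_neg_vec_mul_vec_sub (x y : Fin m → ℝ) :
    wedge m x y = -(vec m y * vec m x) - ip x y • 1 := by
  have hswap : wedge m y x = -wedge m x y := by
    simp_rw [wedge, ← Finset.sum_neg_distrib]
    refine Finset.sum_congr rfl fun i _ => Finset.sum_congr rfl fun j _ => ?_
    split_ifs with h
    · rw [← neg_smul, ← Complex.ofReal_neg, neg_sub, mul_comm (y i), mul_comm (y j)]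
    · rw [neg_zero]
  have hip : ip y x = ip x y := Finset.sum_congr rfl fun i _ => mul_comm _ _
  rw [vec_mul_vec, hswap, hip]
  abel

/-! ### Zonal polynomials and the terms of the kernel -/

lemma add_two_mul_geg (lam w : ℝ) (k : ℕ) :
    ((k : ℝ) + 2) * geg lam (k + 2) w =
      2 * ((k : ℝ) + 1 + lam) * w * geg lam (k + 1) w - ((k : ℝ) + 2 * lam) * geg lam k w := by
  rw [geg, mul_div_cancel₀ _ (by positivity)]

lemma geg_eq_geg_add_one (lam w : ℝ) (k : ℕ) :
    geg lam (k + 2) w =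
      geg (lam + 1) (k + 2) w - 2 * w * geg (lam + 1) (k + 1) w + geg (lam + 1) k w := by
  induction k using Nat.twoStepInduction with
  | zero => simp only [geg]; push_cast; ring
  | one => simp only [geg]; push_cast; ring
  | more k ih₀ ih₁ =>
    have hlam := add_two_mul_geg lam w (k + 2)
    have h₀ := add_two_mul_geg (lam + 1) w k
    have h₁ := add_two_mul_geg (lam + 1) w (k + 1)
    have h₂ := add_two_mul_geg (lam + 1) w (k + 2)
    push_cast at hlam h₀ h₁ h₂
    refine mul_left_cancel₀ (a := (k : ℝ) + 2 + 2) (by positivity) ?_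
    linear_combination hlam + 2 * (k + 3 + lam) * w * ih₁ - (k + 2 + 2 * lam) * ih₀
      - h₂ + 2 * w * h₁ - h₀

/-- The solid zonal polynomial `|x|^k |y|^k C_k^μ(w)` as a polynomial in `p = ⟨x, y⟩` and
`q = |x|² |y|²`. -/
def zonal (μ p q : ℝ) : ℕ → ℝ
  | 0 => 1
  | 1 => 2 * μ * p
  | k + 2 => (2 * ((k : ℝ) + 1 + μ) * p * zonal μ p q (k + 1)
      - ((k : ℝ) + 2 * μ) * q * zonal μ p q k) / ((k : ℝ) + 2)

lemma add_two_mul_zonal (μ p q : ℝ) (k : ℕ) :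
    ((k : ℝ) + 2) * zonal μ p q (k + 2) =
      2 * ((k : ℝ) + 1 + μ) * p * zonal μ p q (k + 1) - ((k : ℝ) + 2 * μ) * q * zonal μ p q k := by
  rw [zonal, mul_div_cancel₀ _ (by positivity)]

lemma pow_mul_geg (μ w z : ℝ) (k : ℕ) : z ^ k * geg μ k w = zonal μ (z * w) (z ^ 2) k := by
  induction k using Nat.twoStepInduction with
  | zero => simp [geg, zonal]
  | one => simp only [geg, zonal]; ring
  | more k ih₀ ih₁ =>
    simp only [geg, zonal, ← ih₀, ← ih₁]
    ring

lemma pow_mul_geg_sub_one (lam w z : ℝ) (k : ℕ) :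
    z ^ (k + 2) * geg lam (k + 2) w = zonal (lam + 1) (z * w) (z ^ 2) (k + 2)
      - 2 * (z * w) * zonal (lam + 1) (z * w) (z ^ 2) (k + 1)
      + z ^ 2 * zonal (lam + 1) (z * w) (z ^ 2) k := by
  simp only [geg_eq_geg_add_one lam, ← pow_mul_geg]
  ring

lemma pow_mul_gegT (lam w z : ℝ) (k : ℕ) :
    z ^ (k + 2) * gegT lam (k + 2) w = zonal (lam + 1) (z * w) (z ^ 2) (k + 2)
      - z ^ 2 * zonal (lam + 1) (z * w) (z ^ 2) k := by
  simp only [gegT, ← pow_mul_geg, le_add_iff_nonneg_left, zero_le, if_true, Nat.add_sub_cancel]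
  ring

/-- The polynomial `|x|^k |y|^k C_k^{m/2}(⟨x, y⟩ / (|x| |y|))` in `x` and `y`. -/
def solidZonal (k : ℕ) (x y : Fin m → ℝ) : ℝ := zonal (m / 2) (ip x y) (ip x x * ip y y) k

/-- The reproducing kernel of the spherical monogenics of degree `k`. -/
def monogenicKernel (x y : Fin m → ℝ) : ℕ → Cl m
  | 0 => 1
  | k + 1 => solidZonal (k + 1) x y • 1 + solidZonal k x y • (vec m y * vec m x)

/-- The coefficient of `2^λ Γ(λ+1) z^{-k-λ} J_{k+λ}(z)` when `A_λ + B_λ + (x∧y) C_λ` is collected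
by the order of the Bessel functions; `u` stands for `i^m`. -/
def kernelTerm (u : ℂ) (x y : Fin m → ℝ) : ℕ → Cl m
  | 0 => 1
  | k + 1 => (-1 : ℝ) ^ (k + 1) • monogenicKernel x y (k + 1)
      + u • (vec m y * monogenicKernel x y k * vec m x)

lemma vec_mul_monogenicKernel_mul_vec (x y : Fin m → ℝ) (k : ℕ) :
    vec m y * monogenicKernel x y (k + 1) * vec m x =
      solidZonal (k + 1) x y • (vec m y * vec m x)
        + (ip x x * ip y y * solidZonal k x y) • 1 := by
  have hsq : vec m y * (vec m y * vec m x) * vec m x = (ip x x * ip y y) • 1 := by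
    rw [← mul_assoc, vec_mul_self, mul_assoc, vec_mul_self, neg_mul_neg, smul_mul_smul_comm,
      mul_one, mul_comm (ip y y)]
  rw [monogenicKernel, mul_add, add_mul, mul_smul_comm, mul_one, smul_mul_assoc, mul_smul_comm,
    smul_mul_assoc, hsq, smul_smul, mul_comm (solidZonal k x y)]

lemma two_smul_kernelTerm (u : ℂ) (x y : Fin m → ℝ) {w z : ℝ} (hzw : z * w = ip x y)
    (hz : z ^ 2 = ip x x * ip y y) (k : ℕ) :
    (2 : ℂ) • kernelTerm u x y k =
      ((u + (-1) ^ k) * (z ^ k * geg ((m - 2) / 2) k w : ℝ)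
        - (u - (-1) ^ k) * (z ^ k * gegT ((m - 2) / 2) k w : ℝ)) • (1 : Cl m)
      - (2 * (u + (-1) ^ k) *
          (z ^ (k - 1) * if 1 ≤ k then geg ((m - 2) / 2 + 1) (k - 1) w else 0 : ℝ)) •
        wedge m x y := by
  have hμ : ((m : ℝ) - 2) / 2 + 1 = m / 2 := by ring
  rw [wedge_eq_neg_vec_mul_vec_sub, ← ofReal_smul (ip x y)]
  rcases k with _ | _ | k
  · simp only [kernelTerm, geg, gegT]
    norm_num
  · simp only [kernelTerm, monogenicKernel, solidZonal, zonal, geg, gegT, ← ofReal_smul, mul_one,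
      ← hzw, zero_add, Nat.sub_self]
    norm_num
    module
  · rw [pow_mul_geg_sub_one, pow_mul_gegT, hμ, if_pos (by omega), add_tsub_cancel_right,
      pow_mul_geg, hzw, hz, kernelTerm, vec_mul_monogenicKernel_mul_vec]
    simp only [monogenicKernel, solidZonal, ← ofReal_smul]
    push_cast
    module

/-! ### Laguerre polynomials -/

/-- The generalized binomial coefficient `binom(j+a, j-i)`, meant for `i ≤ j`. -/
def lagBinom (a : ℝ) (j i : ℕ) : ℝ :=
  Real.Gamma (j + a + 1) / (Real.Gamma (i + a + 1) * (j - i).factorial)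

lemma lag_eq_sum (a : ℝ) (j : ℕ) (t : ℝ) :
    lag a j t = ∑ i ∈ Finset.range (j + 1), (-1) ^ i * lagBinom a j i / i.factorial * t ^ i :=
  Finset.sum_congr rfl fun i _ => by rw [lagBinom]; ring

lemma lagBinom_succ_succ (a : ℝ) (j i : ℕ) :
    lagBinom a (j + 1) (i + 1) = lagBinom (a + 1) j i := by
  rw [lagBinom, lagBinom, Nat.add_sub_add_right]
  congr 3 <;> push_cast <;> ring_nf

lemma sum_lagBinom_mul_choose_succ (a : ℝ) (j s : ℕ) :
    ∑ i ∈ Finset.range (j + 2), lagBinom a (j + 1) i * 2 ^ i * (s + 1).choose i =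
      ∑ i ∈ Finset.range (j + 2), lagBinom a (j + 1) i * 2 ^ i * s.choose i
        + 2 * ∑ i ∈ Finset.range (j + 1), lagBinom (a + 1) j i * 2 ^ i * s.choose i := by
  rw [Finset.sum_range_succ' _ (j + 1), Finset.sum_range_succ' _ (j + 1), Finset.mul_sum,
    add_right_comm, ← Finset.sum_add_distrib]
  simp only [Nat.choose_zero_right, lagBinom_succ_succ, Nat.choose_succ_succ, Nat.cast_add]
  congr 1
  exact Finset.sum_congr rfl fun i _ => by ring

lemma sum_lagBinom_mul_Gamma_succ {a : ℝ} (ha : -1 < a) (j s : ℕ) :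
    ∑ i ∈ Finset.range (j + 2), lagBinom a (j + 1) i * (-2) ^ i / i.factorial *
        (Real.Gamma ((s + 1 : ℕ) + i + a + 1) / Real.Gamma ((s + 1 : ℕ) + a + 1)) =
      ∑ i ∈ Finset.range (j + 2), lagBinom a (j + 1) i * (-2) ^ i / i.factorial *
        (Real.Gamma (s + i + a + 1) / Real.Gamma (s + a + 1))
      - 2 * ∑ i ∈ Finset.range (j + 1), lagBinom (a + 1) j i * (-2) ^ i / i.factorial *
        (Real.Gamma (s + i + (a + 1) + 1) / Real.Gamma (s + (a + 1) + 1)) := by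
  have hpos : ∀ i : ℕ, 0 < (s : ℝ) + i + a + 1 := fun i => by
    linarith [s.cast_nonneg (α := ℝ), i.cast_nonneg (α := ℝ)]
  have hshift : ∀ i : ℕ, Real.Gamma ((s + 1 : ℕ) + i + a + 1) / Real.Gamma ((s + 1 : ℕ) + a + 1) =
      Real.Gamma (s + i + a + 1) / Real.Gamma (s + a + 1)
        + i * Real.Gamma (s + i + a + 1) / Real.Gamma (s + (a + 1) + 1) := fun i => by
    have h₀ : (s : ℝ) + a + 1 ≠ 0 := by simpa using (hpos 0).ne'
    have hΓ : Real.Gamma (s + a + 1) ≠ 0 := (Real.Gamma_pos_of_pos (by simpa using hpos 0)).ne'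
    rw [show ((s + 1 : ℕ) : ℝ) + i + a + 1 = s + i + a + 1 + 1 by push_cast; ring,
      show ((s + 1 : ℕ) : ℝ) + a + 1 = s + a + 1 + 1 by push_cast; ring,
      show (s : ℝ) + (a + 1) + 1 = s + a + 1 + 1 by ring,
      Real.Gamma_add_one (hpos i).ne', Real.Gamma_add_one h₀]
    field_simp
    ring
  simp only [hshift, mul_add, Finset.sum_add_distrib, sub_eq_add_neg]
  congr 1
  rw [Finset.sum_range_succ', ← neg_mul, Finset.mul_sum]
  simp only [lagBinom_succ_succ, Nat.cast_zero, zero_mul, zero_div, mul_zero, add_zero]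
  refine Finset.sum_congr rfl fun i _ => ?_
  rw [Nat.factorial_succ,
    show (s : ℝ) + (i + 1 : ℕ) + a + 1 = s + i + (a + 1) + 1 by push_cast; ring]
  push_cast
  field_simp
  ring

lemma sum_lagBinom_mul_Gamma_zero {a : ℝ} (ha : -1 < a) (j : ℕ) :
    ∑ i ∈ Finset.range (j + 1), lagBinom a j i * (-2) ^ i / i.factorial *
        (Real.Gamma (i + a + 1) / Real.Gamma (a + 1)) = (-1) ^ j * lagBinom a j 0 := by
  have hbinom : ∑ i ∈ Finset.range (j + 1), (-2 : ℝ) ^ i * (j.choose i : ℝ) = (-1) ^ j := by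
    rw [show (-1 : ℝ) = -2 + 1 by norm_num, add_pow]
    simp
  rw [← hbinom, Finset.sum_mul]
  refine Finset.sum_congr rfl fun i hi => ?_
  have hΓ : Real.Gamma (i + a + 1) ≠ 0 :=
    (Real.Gamma_pos_of_pos (by linarith [i.cast_nonneg (α := ℝ)])).ne'
  rw [lagBinom, lagBinom, Nat.cast_choose ℝ (Finset.mem_range_succ_iff.mp hi)]
  simp only [Nat.cast_zero, zero_add, Nat.sub_zero]
  field_simp

lemma sum_lagBinom_mul_Gamma {a : ℝ} (ha : -1 < a) (j s : ℕ) :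
    ∑ i ∈ Finset.range (j + 1), lagBinom a j i * (-2) ^ i / i.factorial *
        (Real.Gamma (s + i + a + 1) / Real.Gamma (s + a + 1)) =
      (-1) ^ j * ∑ i ∈ Finset.range (j + 1), lagBinom a j i * 2 ^ i * s.choose i := by
  induction j generalizing a s with
  | zero =>
    have hΓ : Real.Gamma (s + a + 1) ≠ 0 :=
      (Real.Gamma_pos_of_pos (by linarith [s.cast_nonneg (α := ℝ)])).ne'
    simp [hΓ]
  | succ j ihj =>
    induction s with
    | zero =>
      rw [Finset.sum_range_succ' (fun i => _ * ((0 : ℕ).choose i : ℝ))]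
      simpa using sum_lagBinom_mul_Gamma_zero ha (j + 1)
    | succ s ihs =>
      rw [sum_lagBinom_mul_Gamma_succ ha, sum_lagBinom_mul_choose_succ, ihs, ihj (by linarith)]
      ring

lemma hasSum_pow_div_factorial_mul_choose (x : ℝ) (i : ℕ) :
    HasSum (fun s : ℕ => x ^ s / s.factorial * s.choose i) (x ^ i / i.factorial * Real.exp x) := by
  have hexp : HasSum (fun s : ℕ => x ^ s / s.factorial) (Real.exp x) := by
    rw [Real.exp_eq_exp_ℝ]
    exact NormedSpace.expSeries_div_hasSum_exp x
  rw [← hasSum_nat_add_iff' i, Finset.sum_eq_zero fun s hs => by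
    rw [Nat.choose_eq_zero_of_lt (Finset.mem_range.mp hs), Nat.cast_zero, mul_zero], sub_zero]
  refine (hexp.mul_left (x ^ i / i.factorial)).congr_fun fun s => ?_
  rw [add_comm s i, Nat.cast_add_choose ℝ, pow_add]
  field_simp

lemma hasSum_lag_hankel {a : ℝ} (ha : -1 < a) (j : ℕ) (t : ℝ) :
    HasSum (fun s : ℕ => (-t / 2) ^ s / s.factorial *
        ∑ i ∈ Finset.range (j + 1), (-1) ^ i * lagBinom a j i / i.factorial *
          (2 ^ i * (Real.Gamma (s + i + a + 1) / Real.Gamma (s + a + 1))))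
      ((-1) ^ j * (lag a j t * Real.exp (-t / 2))) := by
  have hcoeff : ∀ s : ℕ, (-t / 2) ^ s / s.factorial *
        ∑ i ∈ Finset.range (j + 1), (-1) ^ i * lagBinom a j i / i.factorial *
          (2 ^ i * (Real.Gamma (s + i + a + 1) / Real.Gamma (s + a + 1))) =
      (-1) ^ j * ∑ i ∈ Finset.range (j + 1), lagBinom a j i * 2 ^ i *
        ((-t / 2) ^ s / s.factorial * s.choose i) := fun s => by
    have hsum := sum_lagBinom_mul_Gamma ha j s
    simp_rw [mul_left_comm _ ((-t / 2) ^ s / s.factorial : ℝ), ← Finset.mul_sum]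
    rw [mul_left_comm, ← hsum]
    congr 1
    exact Finset.sum_congr rfl fun i _ => by rw [neg_pow 2]; ring
  simp_rw [hcoeff]
  refine HasSum.mul_left _ ?_
  rw [lag_eq_sum, Finset.sum_mul]
  refine hasSum_sum fun i _ => ?_
  convert (hasSum_pow_div_factorial_mul_choose (-t / 2) i).mul_left (lagBinom a j i * 2 ^ i) using 1
  rw [div_pow, neg_pow t]
  field_simp

/-! ### Smooth homogeneous functions -/

section Homogeneous

variable {V W U : Type*} [NormedAddCommGroup V] [NormedSpace ℝ V] [NormedAddCommGroup W]
  [NormedSpace ℝ W] [NormedAddCommGroup U] [NormedSpace ℝ U]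

/-- The derivative of `f` in the direction `v`; `pder i` is the case `v = Pi.single i 1`. -/
def dirDeriv (v : Fin m → ℝ) (f : (Fin m → ℝ) → V) : (Fin m → ℝ) → V := fun x => fderiv ℝ f x v

lemma dirDeriv_linearMap (v : Fin m → ℝ) (L : (Fin m → ℝ) →ₗ[ℝ] V) :
    dirDeriv v L = fun _ => L v := by
  ext x
  exact congrArg (· v) (LinearMap.toContinuousLinearMap L).fderiv

lemma dirDeriv_bilinear (B : V →L[ℝ] W →L[ℝ] U) {f : (Fin m → ℝ) → V} {g : (Fin m → ℝ) → W}
    (hf : Differentiable ℝ f) (hg : Differentiable ℝ g) (v : Fin m → ℝ) :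
    dirDeriv v (fun x => B (f x) (g x)) =
      fun x => B (dirDeriv v f x) (g x) + B (f x) (dirDeriv v g x) := by
  ext x
  simp [dirDeriv, B.fderiv_of_bilinear (hf x) (hg x), add_comm]

lemma dirDeriv_smul {φ : (Fin m → ℝ) → ℝ} {f : (Fin m → ℝ) → V} (hφ : Differentiable ℝ φ)
    (hf : Differentiable ℝ f) (v : Fin m → ℝ) :
    dirDeriv v (fun x => φ x • f x) = fun x => dirDeriv v φ x • f x + φ x • dirDeriv v f x :=
  dirDeriv_bilinear (.lsmul ℝ ℝ) hφ hf v

/-- Smooth functions on `ℝ^m` that are homogeneous of degree `d`. These are exactly the homogeneous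
polynomials of degree `d` with values in `V`. -/
structure IsHomog (d : ℕ) (f : (Fin m → ℝ) → V) : Prop where
  contDiff : ContDiff ℝ ∞ f
  apply_smul : ∀ (c : ℝ) (x : Fin m → ℝ), f (c • x) = c ^ d • f x

namespace IsHomog

variable {d d' : ℕ} {f g : (Fin m → ℝ) → V} {φ : (Fin m → ℝ) → ℝ}

lemma differentiable (hf : IsHomog d f) : Differentiable ℝ f :=
  hf.contDiff.differentiable (by simp)

lemma eq_apply_zero (hf : IsHomog 0 f) (x : Fin m → ℝ) : f x = f 0 := by
  simpa using (hf.apply_smul 0 x).symm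

lemma const (a : V) : IsHomog 0 fun _ : Fin m → ℝ => a := ⟨contDiff_const, by simp⟩

lemma of_linear (L : (Fin m → ℝ) →ₗ[ℝ] V) : IsHomog 1 L :=
  ⟨(LinearMap.toContinuousLinearMap L).contDiff, by simp⟩

lemma add (hf : IsHomog d f) (hg : IsHomog d g) : IsHomog d fun x => f x + g x :=
  ⟨hf.contDiff.add hg.contDiff, fun c x => by rw [hf.apply_smul, hg.apply_smul, smul_add]⟩

lemma clm_comp (L : V →L[ℝ] W) (hf : IsHomog d f) : IsHomog d fun x => L (f x) :=
  ⟨L.contDiff.comp hf.contDiff, fun c x => by rw [hf.apply_smul, map_smul]⟩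

lemma const_smul (r : ℝ) (hf : IsHomog d f) : IsHomog d fun x => r • f x :=
  hf.clm_comp (r • ContinuousLinearMap.id ℝ V)

lemma sum {ι : Type*} {s : Finset ι} {F : ι → (Fin m → ℝ) → V} (hF : ∀ i ∈ s, IsHomog d (F i)) :
    IsHomog d fun x => ∑ i ∈ s, F i x :=
  ⟨ContDiff.sum fun i hi => (hF i hi).contDiff, fun c x => by
    rw [Finset.smul_sum]
    exact Finset.sum_congr rfl fun i hi => (hF i hi).apply_smul c x⟩

lemma bilinear (B : V →L[ℝ] W →L[ℝ] U) {g : (Fin m → ℝ) → W} (hf : IsHomog d f)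
    (hg : IsHomog d' g) : IsHomog (d + d') fun x => B (f x) (g x) :=
  ⟨(B.contDiff.comp hf.contDiff).clm_apply hg.contDiff, fun c x => by
    simp only [hf.apply_smul, hg.apply_smul, map_smul, _root_.smul_apply, smul_smul]
    rw [mul_comm, ← pow_add]⟩

lemma smul (hφ : IsHomog d φ) (hf : IsHomog d' f) : IsHomog (d + d') fun x => φ x • f x :=
  hφ.bilinear (ContinuousLinearMap.lsmul ℝ ℝ) hf

protected lemma dirDeriv (v : Fin m → ℝ) (hf : IsHomog d f) : IsHomog (d - 1) (dirDeriv v f) := by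
  have hsmooth : ContDiff ℝ ∞ (dirDeriv v f) :=
    (hf.contDiff.fderiv_right le_rfl).clm_apply contDiff_const
  refine ⟨hsmooth, fun c x => ?_⟩
  rcases d with _ | d
  · have hconst : f = fun _ => f 0 := funext hf.eq_apply_zero
    rw [hconst]
    simp [dirDeriv]
  refine congrFun (Continuous.ext_on (dense_compl_singleton (0 : ℝ))
    (f := fun c : ℝ => dirDeriv v f (c • x)) (g := fun c : ℝ => c ^ d • dirDeriv v f x)
    (hsmooth.continuous.comp (by fun_prop)) (by fun_prop) fun c (hc : c ≠ 0) => ?_) c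
  have hscale : c • fderiv ℝ f (c • x) = c ^ (d + 1) • fderiv ℝ f x := by
    rw [← fderiv_comp_smul, ← fderiv_const_smul (hf.differentiable x)]
    exact congrArg (fderiv ℝ · x) (funext (hf.apply_smul c))
  refine smul_right_injective V hc ?_
  simpa [dirDeriv, smul_smul, pow_succ'] using congrArg (fun L => L v) hscale

lemma dirDeriv_self (hf : IsHomog d f) (x : Fin m → ℝ) : dirDeriv x f x = (d : ℝ) • f x := by
  have hline : HasDerivAt (fun c : ℝ => f (c • x)) (fderiv ℝ f x x) 1 := by
    have hsmul : HasDerivAt (fun c : ℝ => c • x) x 1 := by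
      simpa using (hasDerivAt_id (1 : ℝ)).smul_const x
    exact HasFDerivAt.comp_hasDerivAt 1 (by simpa using (hf.differentiable x).hasFDerivAt) hsmul
  have hpow : HasDerivAt (fun c : ℝ => c ^ d • f x) ((d : ℝ) • f x) 1 := by
    simpa using (hasDerivAt_pow d (1 : ℝ)).smul_const (f x)
  simp only [hf.apply_smul] at hline
  exact hline.unique hpow

lemma exists_norm_le (hf : IsHomog d f) : ∃ C, ∀ x, ‖f x‖ ≤ C * ‖x‖ ^ d := by
  obtain ⟨C, hC⟩ := (isCompact_closedBall (0 : Fin m → ℝ) 1).exists_bound_of_continuousOn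
    hf.contDiff.continuous.continuousOn
  refine ⟨C, fun x => ?_⟩
  have hx : x = ‖x‖ • (‖x‖⁻¹ • x) := by
    rcases eq_or_ne x 0 with rfl | hx
    · simp
    · rw [smul_inv_smul₀ (norm_ne_zero_iff.mpr hx)]
  have hunit : ‖x‖⁻¹ • x ∈ Metric.closedBall (0 : Fin m → ℝ) 1 := by
    simpa [norm_smul] using inv_mul_le_one
  calc ‖f x‖ = ‖x‖ ^ d * ‖f (‖x‖⁻¹ • x)‖ := by
        conv_lhs => rw [hx, hf.apply_smul, norm_smul, norm_pow, norm_norm]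
    _ ≤ ‖x‖ ^ d * C := by gcongr; exact hC _ hunit
    _ = C * ‖x‖ ^ d := mul_comm _ _

end IsHomog

lemma ip_comm (x y : Fin m → ℝ) : ip x y = ip y x := dotProduct_comm x y

lemma ip_self_nonneg (x : Fin m → ℝ) : 0 ≤ ip x x := Finset.sum_nonneg fun _ _ => mul_self_nonneg _

lemma nrm_sq (x : Fin m → ℝ) : nrm x ^ 2 = ip x x := Real.sq_sqrt (ip_self_nonneg x)

lemma norm_le_nrm (x : Fin m → ℝ) : ‖x‖ ≤ nrm x :=
  (pi_norm_le_iff_of_nonneg (Real.sqrt_nonneg _)).mpr fun i => Real.abs_le_sqrt (by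
    rw [sq]
    exact Finset.single_le_sum (f := fun i => x i * x i) (fun _ _ => mul_self_nonneg _)
      (Finset.mem_univ i))

lemma ip_self_eq_bilinear : (fun x : Fin m → ℝ => ip x x) =
    fun x => (dotProductBilin ℝ ℝ).toContinuousBilinearMap (LinearMap.id (R := ℝ) x)
      (LinearMap.id (R := ℝ) x) := rfl

lemma isHomog_ip (y : Fin m → ℝ) : IsHomog 1 fun x => ip x y :=
  .of_linear ((dotProductBilin ℝ ℝ).flip y)

lemma isHomog_ip_self : IsHomog 2 fun x : Fin m → ℝ => ip x x := by
  rw [ip_self_eq_bilinear]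
  exact (IsHomog.of_linear .id).bilinear _ (.of_linear .id)

lemma dirDeriv_ip (v y : Fin m → ℝ) : dirDeriv v (ip · y) = fun _ => ip v y :=
  dirDeriv_linearMap v ((dotProductBilin ℝ ℝ).flip y)

lemma dirDeriv_ip_self (v : Fin m → ℝ) :
    dirDeriv v (fun x => ip x x) = fun x => 2 * ip x v := by
  have hid : Differentiable ℝ (LinearMap.id : (Fin m → ℝ) →ₗ[ℝ] _) := differentiable_id
  rw [ip_self_eq_bilinear, dirDeriv_bilinear _ hid hid, dirDeriv_linearMap]
  ext x
  change ip v x + ip x v = 2 * ip x v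
  rw [ip_comm, two_mul]

lemma isHomog_vec : IsHomog 1 (vec m) := by
  simp only [funext vec_eq_sum]
  exact .sum fun i _ => (IsHomog.of_linear (.proj i)).smul (.const (e m i))

end Homogeneous

/-! ### Gaussian integrals -/

section Gaussian

variable {V : Type*} [NormedAddCommGroup V] [NormedSpace ℝ V]

/-- The Gaussian weight `e^{-|x|²/2}`. -/
def gaussian (x : Fin m → ℝ) : ℝ := Real.exp (-(ip x x) / 2)

lemma contDiff_gaussian : ContDiff ℝ ∞ (gaussian : (Fin m → ℝ) → ℝ) :=
  (isHomog_ip_self.contDiff.neg.div_const 2).exp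

lemma exp_neg_mul_ip_self (b : ℝ) (x : Fin m → ℝ) :
    Real.exp (-b * ip x x) = ∏ i, Real.exp (-b * x i ^ 2) := by
  simp only [← Real.exp_sum, ip, Finset.mul_sum, sq]

lemma integrable_exp_neg_mul_ip_self {b : ℝ} (hb : 0 < b) :
    Integrable fun x : Fin m → ℝ => Real.exp (-b * ip x x) := by
  simp_rw [exp_neg_mul_ip_self]
  exact Integrable.fintype_prod (f := fun _ t => Real.exp (-b * t ^ 2))
    fun _ => integrable_exp_neg_mul_sq hb

lemma integral_gaussian_weight : ∫ x : Fin m → ℝ, gaussian x = (2 * Real.pi) ^ ((m : ℝ) / 2) := by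
  have hprod (x : Fin m → ℝ) : gaussian x = ∏ i, Real.exp (-(1 / 2) * x i ^ 2) := by
    rw [← exp_neg_mul_ip_self, gaussian]
    ring_nf
  simp_rw [hprod]
  rw [integral_fintype_prod_volume_eq_prod fun _ t => Real.exp (-(1 / 2) * t ^ 2),
    integral_gaussian, Finset.prod_const, Finset.card_univ, Fintype.card_fin, Real.sqrt_eq_rpow,
    ← Real.rpow_mul_natCast (by positivity)]
  ring_nf

lemma gaussian_mul_exp_le (c : ℝ) (x : Fin m → ℝ) :
    gaussian x * Real.exp (c * nrm x) ≤ Real.exp (c ^ 2) * Real.exp (-(1 / 4) * ip x x) := by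
  rw [gaussian, ← Real.exp_add, ← Real.exp_add, Real.exp_le_exp, ← nrm_sq]
  linarith [sq_nonneg (c - nrm x / 2)]

lemma integrable_gaussian_mul_exp (c : ℝ) :
    Integrable fun x : Fin m → ℝ => gaussian x * Real.exp (c * nrm x) := by
  refine ((integrable_exp_neg_mul_ip_self (by norm_num : (0 : ℝ) < 1 / 4)).const_mul
    (Real.exp (c ^ 2))).mono' (Continuous.aestronglyMeasurable ?_) (.of_forall fun x => ?_)
  · exact contDiff_gaussian.continuous.mul
      ((continuous_const.mul isHomog_ip_self.contDiff.continuous.sqrt).rexp)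
  · rw [Real.norm_of_nonneg (by rw [gaussian]; positivity)]
    exact gaussian_mul_exp_le c x

lemma IsHomog.exists_norm_le_exp {d : ℕ} {f : (Fin m → ℝ) → V} (hf : IsHomog d f) :
    ∃ C, ∀ x, ‖f x‖ ≤ C * Real.exp (nrm x) := by
  obtain ⟨C, hC⟩ := hf.exists_norm_le
  refine ⟨|C| * d.factorial, fun x => ?_⟩
  have hexp : ‖x‖ ^ d ≤ d.factorial * Real.exp (nrm x) := by
    rw [mul_comm, ← div_le_iff₀ (by positivity)]
    exact (Real.pow_div_factorial_le_exp _ (norm_nonneg x) d).trans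
      (Real.exp_le_exp.mpr (norm_le_nrm x))
  calc ‖f x‖ ≤ C * ‖x‖ ^ d := hC x
    _ ≤ |C| * (d.factorial * Real.exp (nrm x)) := by
        gcongr
        exact le_abs_self C
    _ = |C| * d.factorial * Real.exp (nrm x) := (mul_assoc _ _ _).symm

lemma IsHomog.integrable {d : ℕ} {f : (Fin m → ℝ) → V} (hf : IsHomog d f) :
    Integrable fun x => gaussian x • f x := by
  obtain ⟨C, hC⟩ := hf.exists_norm_le_exp
  refine ((integrable_gaussian_mul_exp 1).const_mul C).mono'
    (contDiff_gaussian.continuous.smul hf.contDiff.continuous).aestronglyMeasurable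
    (.of_forall fun x => ?_)
  rw [norm_smul, gaussian, Real.norm_of_nonneg (Real.exp_nonneg _), one_mul, mul_left_comm]
  gcongr
  exact hC x

lemma dirDeriv_gaussian (v : Fin m → ℝ) :
    dirDeriv v gaussian = fun x => -(ip x v * gaussian x) := by
  ext x
  have hip : fderiv ℝ (fun x => ip x x) x v = 2 * ip x v := congrFun (dirDeriv_ip_self v) x
  have hexponent : HasFDerivAt (fun x : Fin m → ℝ => -(ip x x) / 2)
      ((2 : ℝ)⁻¹ • -fderiv ℝ (fun x => ip x x) x) x := by
    simpa only [div_eq_mul_inv] using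
      (isHomog_ip_self.differentiable x).hasFDerivAt.fun_neg.mul_const (2 : ℝ)⁻¹
  rw [dirDeriv, show gaussian = fun x : Fin m → ℝ => Real.exp (-(ip x x) / 2) from rfl,
    hexponent.exp.fderiv]
  simp only [neg_apply, smul_apply, smul_neg, smul_eq_mul, hip]
  ring

lemma integral_gaussian_smul_ip_smul {d : ℕ} {f : (Fin m → ℝ) → V} (hf : IsHomog d f)
    (v : Fin m → ℝ) :
    ∫ x, gaussian x • ip x v • f x = ∫ x, gaussian x • dirDeriv v f x := by
  have hderiv (x : Fin m → ℝ) : fderiv ℝ gaussian x v • f x = -(gaussian x • ip x v • f x) := by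
    rw [← dirDeriv, dirDeriv_gaussian, neg_smul, smul_smul, mul_comm]
  have hparts := integral_smul_fderiv_eq_neg_fderiv_smul_of_integrable (μ := volume)
    (f := gaussian) (g := f) (v := v)
    (by simpa only [hderiv] using ((isHomog_ip v).smul hf).integrable.fun_neg)
    (hf.dirDeriv v).integrable hf.integrable
    (fun x _ => contDiff_gaussian.differentiable (by simp) x) (fun x _ => hf.differentiable x)
  simp only [hderiv, integral_neg, neg_neg] at hparts
  exact hparts.symm

lemma sum_smul_dirDeriv_single (y : Fin m → ℝ) (f : (Fin m → ℝ) → V) (x : Fin m → ℝ) :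
    ∑ i, y i • dirDeriv (Pi.single i 1) f x = dirDeriv y f x := by
  simp only [dirDeriv, ← map_smul, ← map_sum]
  congr 1
  ext j
  simp [Finset.sum_apply, Pi.single_apply]

lemma ip_single_one (x : Fin m → ℝ) (i : Fin m) : ip x (Pi.single i 1) = x i := by
  simp [ip, Pi.single_apply]

lemma single_one_ip (x : Fin m → ℝ) (i : Fin m) : ip (Pi.single i 1) x = x i := by
  rw [ip_comm, ip_single_one]

lemma integral_gaussian_smul_ip_self_smul {d : ℕ} {f : (Fin m → ℝ) → V} (hf : IsHomog d f) :
    ∫ x, gaussian x • ip x x • f x = ((m : ℝ) + d) • ∫ x, gaussian x • f x := by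
  have hcoord (i : Fin m) := (isHomog_ip (Pi.single i 1)).smul hf
  have hleibniz (i : Fin m) (x : Fin m → ℝ) :
      dirDeriv (Pi.single i 1) (fun x => ip x (Pi.single i 1) • f x) x
        = f x + x i • dirDeriv (Pi.single i 1) f x := by
    rw [dirDeriv_smul (isHomog_ip _).differentiable hf.differentiable, dirDeriv_ip]
    simp only [ip_single_one, Pi.single_eq_same, one_smul]
  have hsum (x : Fin m → ℝ) :
      ∑ i, (f x + x i • dirDeriv (Pi.single i 1) f x) = ((m : ℝ) + d) • f x := by
    rw [Finset.sum_add_distrib, sum_smul_dirDeriv_single, hf.dirDeriv_self, Finset.sum_const,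
      Finset.card_univ, Fintype.card_fin, add_smul, Nat.cast_smul_eq_nsmul ℝ m]
  calc ∫ x, gaussian x • ip x x • f x
      = ∑ i, ∫ x, gaussian x • ip x (Pi.single i 1) • ip x (Pi.single i 1) • f x := by
        rw [← integral_finsetSum _ fun i _ => ((isHomog_ip _).smul (hcoord i)).integrable]
        simp only [ip_single_one, smul_smul, ← Finset.sum_smul, ← Finset.mul_sum]
        rfl
    _ = ∑ i, ∫ x, gaussian x • (f x + x i • dirDeriv (Pi.single i 1) f x) := by
        simp only [integral_gaussian_smul_ip_smul (hcoord _), hleibniz]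
    _ = ∫ x, gaussian x • (((m : ℝ) + d) • f x) := by
        rw [← integral_finsetSum _ fun i _ => by
          simpa only [hleibniz] using ((hcoord i).dirDeriv (Pi.single i 1)).integrable]
        simp only [← Finset.smul_sum, hsum]
    _ = ((m : ℝ) + d) • ∫ x, gaussian x • f x := by
        simp only [smul_comm (gaussian _), integral_smul]

/-- The Laplacian of a vector-valued function; `lapl` is the case of values in `Cl m`. -/
def laplacian (f : (Fin m → ℝ) → V) : (Fin m → ℝ) → V :=
  fun x => ∑ i, dirDeriv (Pi.single i 1) (dirDeriv (Pi.single i 1) f) x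

lemma smul_integral_gaussian_smul {d : ℕ} {f : (Fin m → ℝ) → V} (hf : IsHomog d f) :
    (d : ℝ) • ∫ x, gaussian x • f x = ∫ x, gaussian x • laplacian f x := by
  have hD (i : Fin m) := hf.dirDeriv (Pi.single i 1)
  calc (d : ℝ) • ∫ x, gaussian x • f x
      = ∫ x, ∑ i, gaussian x • ip x (Pi.single i 1) • dirDeriv (Pi.single i 1) f x := by
        simp only [← integral_smul, smul_comm (d : ℝ), ← hf.dirDeriv_self, ip_single_one,
          ← Finset.smul_sum, sum_smul_dirDeriv_single]
    _ = ∫ x, gaussian x • laplacian f x := by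
        rw [integral_finsetSum _ fun i _ => ((isHomog_ip _).smul (hD i)).integrable]
        simp only [integral_gaussian_smul_ip_smul (hD _), laplacian, Finset.smul_sum]
        rw [integral_finsetSum _ fun i _ => ((hD i).dirDeriv _).integrable]

end Gaussian

/-! ### Solid harmonics -/

section Harmonic

variable {V W U : Type*} [NormedAddCommGroup V] [NormedSpace ℝ V] [NormedAddCommGroup W]
  [NormedSpace ℝ W] [NormedAddCommGroup U] [NormedSpace ℝ U]

lemma dirDeriv_comm {f : (Fin m → ℝ) → V} (hf : ContDiff ℝ ∞ f) (v w : Fin m → ℝ) :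
    dirDeriv v (dirDeriv w f) = dirDeriv w (dirDeriv v f) := by
  ext x
  have hfderiv : DifferentiableAt ℝ (fderiv ℝ f) x :=
    (hf.fderiv_right (m := ∞) le_rfl).differentiable (by simp) x
  have happly (a b : Fin m → ℝ) :
      dirDeriv a (dirDeriv b f) x = fderiv ℝ (fderiv ℝ f) x a b := by
    change fderiv ℝ (fun x => fderiv ℝ f x b) x a = _
    simp [fderiv_clm_apply hfderiv (differentiableAt_const b)]
  rw [happly, happly]
  exact hf.contDiffAt.isSymmSndFDerivAt (by simpa using ENat.LEInfty.out) v w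

lemma dirDeriv_const (v : Fin m → ℝ) (a : V) : dirDeriv v (fun _ : Fin m → ℝ => a) = 0 := by
  ext x
  simp [dirDeriv]

lemma dirDeriv_add {f g : (Fin m → ℝ) → V} (hf : Differentiable ℝ f) (hg : Differentiable ℝ g)
    (v : Fin m → ℝ) :
    dirDeriv v (fun x => f x + g x) = fun x => dirDeriv v f x + dirDeriv v g x := by
  ext x
  simp [dirDeriv, fderiv_fun_add (hf x) (hg x)]

lemma dirDeriv_const_smul {f : (Fin m → ℝ) → V} (hf : Differentiable ℝ f) (r : ℝ)
    (v : Fin m → ℝ) :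
    dirDeriv v (fun x => r • f x) = fun x => r • dirDeriv v f x := by
  ext x
  simp [dirDeriv, fderiv_fun_const_smul (hf x)]

lemma dirDeriv_sum {ι : Type*} {s : Finset ι} {F : ι → (Fin m → ℝ) → V}
    (hF : ∀ i ∈ s, Differentiable ℝ (F i)) (v : Fin m → ℝ) :
    dirDeriv v (fun x => ∑ i ∈ s, F i x) = fun x => ∑ i ∈ s, dirDeriv v (F i) x := by
  ext x
  simp [dirDeriv, fderiv_fun_sum fun i hi => hF i hi x]

lemma laplacian_add_const_smul {d d' : ℕ} {f g : (Fin m → ℝ) → V} (hf : IsHomog d f)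
    (hg : IsHomog d' g) (r : ℝ) :
    laplacian (fun x => f x + r • g x) = fun x => laplacian f x + r • laplacian g x := by
  ext x
  simp only [laplacian, Finset.smul_sum, ← Finset.sum_add_distrib]
  refine Finset.sum_congr rfl fun i _ => ?_
  rw [dirDeriv_add hf.differentiable (hg.const_smul r).differentiable,
    dirDeriv_const_smul hg.differentiable,
    dirDeriv_add (hf.dirDeriv _).differentiable ((hg.dirDeriv _).const_smul r).differentiable,
    dirDeriv_const_smul (hg.dirDeriv _).differentiable]

lemma laplacian_dirDeriv {d : ℕ} {f : (Fin m → ℝ) → V} (hf : IsHomog d f) (v : Fin m → ℝ) :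
    laplacian (dirDeriv v f) = dirDeriv v (laplacian f) := by
  ext x
  unfold laplacian
  rw [dirDeriv_sum fun i _ => ((hf.dirDeriv _).dirDeriv _).differentiable]
  refine Finset.sum_congr rfl fun i _ => ?_
  rw [dirDeriv_comm hf.contDiff, dirDeriv_comm (hf.dirDeriv _).contDiff]

lemma laplacian_bilinear (B : V →L[ℝ] W →L[ℝ] U) {d d' : ℕ} {f : (Fin m → ℝ) → V}
    {g : (Fin m → ℝ) → W} (hf : IsHomog d f) (hg : IsHomog d' g) :
    laplacian (fun x => B (f x) (g x)) = fun x => B (laplacian f x) (g x) + B (f x) (laplacian g x)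
      + (2 : ℝ) • ∑ i, B (dirDeriv (Pi.single i 1) f x) (dirDeriv (Pi.single i 1) g x) := by
  ext x
  simp only [laplacian, map_sum, sum_apply, Finset.smul_sum, ← Finset.sum_add_distrib]
  refine Finset.sum_congr rfl fun i _ => ?_
  have hDf := hf.dirDeriv (Pi.single i 1)
  have hDg := hg.dirDeriv (Pi.single i 1)
  rw [dirDeriv_bilinear B hf.differentiable hg.differentiable,
    dirDeriv_add (hDf.bilinear B hg).differentiable (hf.bilinear B hDg).differentiable,
    dirDeriv_bilinear B hDf.differentiable hg.differentiable,
    dirDeriv_bilinear B hf.differentiable hDg.differentiable]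
  module

lemma laplacian_linearMap (L : (Fin m → ℝ) →ₗ[ℝ] V) : laplacian L = 0 := by
  ext x
  simp [laplacian, dirDeriv_linearMap, dirDeriv_const]

lemma laplacian_ip_self : laplacian (fun x : Fin m → ℝ => ip x x) = fun _ => 2 * (m : ℝ) := by
  ext x
  have hcoord (i : Fin m) : dirDeriv (Pi.single i 1) (fun x => 2 * ip x (Pi.single i 1)) x = 2 := by
    refine (congrFun (dirDeriv_const_smul (isHomog_ip _).differentiable 2 _) x).trans ?_
    rw [dirDeriv_ip, ip_single_one, Pi.single_eq_same, smul_eq_mul, mul_one]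
  simp [laplacian, dirDeriv_ip_self, hcoord, mul_comm]

lemma laplacian_ip_smul {d : ℕ} {f : (Fin m → ℝ) → V} (hf : IsHomog d f) (y : Fin m → ℝ) :
    laplacian (fun x => ip x y • f x) =
      fun x => (2 : ℝ) • dirDeriv y f x + ip x y • laplacian f x := by
  have hlin : laplacian (ip · y) = 0 := laplacian_linearMap ((dotProductBilin ℝ ℝ).flip y)
  refine (laplacian_bilinear (.lsmul ℝ ℝ) (isHomog_ip y) hf).trans (funext fun x => ?_)
  simp only [hlin, dirDeriv_ip, single_one_ip, ContinuousLinearMap.lsmul_apply,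
    sum_smul_dirDeriv_single, Pi.zero_apply, zero_smul, zero_add, add_comm (ip x y • _)]

lemma laplacian_ip_self_smul {d : ℕ} {f : (Fin m → ℝ) → V} (hf : IsHomog d f) :
    laplacian (fun x => ip x x • f x) =
      fun x => (2 * (m : ℝ) + 4 * d) • f x + ip x x • laplacian f x := by
  refine (laplacian_bilinear (.lsmul ℝ ℝ) isHomog_ip_self hf).trans (funext fun x => ?_)
  simp only [laplacian_ip_self, dirDeriv_ip_self, ip_single_one, ContinuousLinearMap.lsmul_apply,
    mul_smul, ← Finset.smul_sum, sum_smul_dirDeriv_single, hf.dirDeriv_self]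
  module

/-- Solid harmonics of degree `d`: the smooth homogeneous functions of degree `d` that are
annihilated by the Laplacian. -/
structure IsSolidHarmonic (d : ℕ) (f : (Fin m → ℝ) → V) : Prop extends IsHomog d f where
  laplacian_eq_zero : laplacian f = 0

/-- The projection of `⟨x, y⟩ f(x)` to the solid harmonics of degree `d + 1`, for a solid harmonic
`f` of degree `d`. -/
def harmonicRaise (y : Fin m → ℝ) (d : ℕ) (f : (Fin m → ℝ) → V) : (Fin m → ℝ) → V :=
  fun x => ip x y • f x + (-((m : ℝ) + 2 * d - 2)⁻¹) • ip x x • dirDeriv y f x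

namespace IsSolidHarmonic

variable {d : ℕ} {f : (Fin m → ℝ) → V}

protected lemma dirDeriv (hf : IsSolidHarmonic d f) (v : Fin m → ℝ) :
    IsSolidHarmonic (d - 1) (dirDeriv v f) :=
  ⟨hf.toIsHomog.dirDeriv v, by
    rw [laplacian_dirDeriv hf.toIsHomog, hf.laplacian_eq_zero]
    exact dirDeriv_const v 0⟩

lemma integral_eq_zero (hf : IsSolidHarmonic d f) (hd : d ≠ 0) : ∫ x, gaussian x • f x = 0 := by
  have hlap := smul_integral_gaussian_smul hf.toIsHomog
  simpa [hf.laplacian_eq_zero, hd] using hlap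

protected lemma harmonicRaise (hm : 0 < m) (hf : IsSolidHarmonic d f) (y : Fin m → ℝ) :
    IsSolidHarmonic (d + 1) (harmonicRaise y d f) := by
  have hip : IsHomog (d + 1) fun x => ip x y • f x :=
    add_comm 1 d ▸ (isHomog_ip y).smul hf.toIsHomog
  have hD := hf.dirDeriv y
  have hsq := isHomog_ip_self.smul hD.toIsHomog
  have hlap : laplacian (harmonicRaise y d f) = fun x => (2 : ℝ) • dirDeriv y f x
      + (-((m : ℝ) + 2 * d - 2)⁻¹) • (2 * (m : ℝ) + 4 * (d - 1 : ℕ)) • dirDeriv y f x := by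
    refine (laplacian_add_const_smul hip hsq _).trans ?_
    rw [laplacian_ip_smul hf.toIsHomog, laplacian_ip_self_smul hD.toIsHomog]
    simp only [hf.laplacian_eq_zero, hD.laplacian_eq_zero, Pi.zero_apply, smul_zero, add_zero]
  rcases d with _ | d
  · have hzero : dirDeriv y f = 0 := by
      rw [funext hf.toIsHomog.eq_apply_zero, dirDeriv_const]
    exact ⟨by unfold harmonicRaise; simpa [hzero] using hip, by simp [hlap, hzero, Pi.zero_def]⟩
  · have hne : (m : ℝ) + 2 * (d + 1 : ℕ) - 2 ≠ 0 := by
      push_cast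
      ring_nf
      positivity
    refine ⟨hip.add (.const_smul _ (add_comm 2 d ▸ hsq)), ?_⟩
    rw [hlap]
    ext x
    rw [smul_smul, ← add_smul, Nat.add_sub_cancel,
      show 2 * (m : ℝ) + 4 * d = 2 * (m + 2 * (d + 1 : ℕ) - 2) by push_cast; ring, neg_mul,
      mul_left_comm, inv_mul_cancel₀ hne, mul_one, add_neg_cancel, zero_smul, Pi.zero_apply]

end IsSolidHarmonic

end Harmonic

/-! ### The Gaussian Funk–Hecke formula -/

section FunkHecke

variable {V : Type*} [NormedAddCommGroup V] [NormedSpace ℝ V]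

/-- The Gaussian moment `∫ |x|^{2n} e^{-|x|²/2} dx`, in closed form. -/
def gaussianMoment (m n : ℕ) : ℝ :=
  (2 * Real.pi) ^ ((m : ℝ) / 2) * ∏ r ∈ Finset.range n, ((m : ℝ) + 2 * r)

lemma gaussianMoment_succ (m n : ℕ) :
    gaussianMoment m (n + 1) = (m + 2 * n) * gaussianMoment m n := by
  rw [gaussianMoment, gaussianMoment, Finset.prod_range_succ]
  ring

lemma gaussianMoment_zero (m : ℕ) : gaussianMoment m 0 = (2 * Real.pi) ^ ((m : ℝ) / 2) := by
  rw [gaussianMoment, Finset.prod_range_zero, mul_one]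

/-- The eigenvalue, on solid harmonics of degree `l`, of the Gaussian integral operator with kernel
`solidZonal k`; here `t` stands for `|y|²`. -/
def zonalEigenvalue (m : ℕ) (t : ℝ) (k l : ℕ) : ℝ :=
  if l ≤ k ∧ Even (k + l) then gaussianMoment m ((k + l) / 2) * t ^ ((k - l) / 2) else 0

lemma zonalEigenvalue_add_two_mul (t : ℝ) (l n : ℕ) :
    zonalEigenvalue m t (l + 2 * n) l = gaussianMoment m (l + n) * t ^ n := by
  rw [zonalEigenvalue, if_pos ⟨by omega, ⟨l + n, by omega⟩⟩]
  congr 2 <;> omega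

lemma zonalEigenvalue_of_lt (t : ℝ) {k l : ℕ} (h : k < l) : zonalEigenvalue m t k l = 0 :=
  if_neg fun hkl => by omega

lemma zonalEigenvalue_of_not_even (t : ℝ) {k l : ℕ} (h : ¬Even (k + l)) :
    zonalEigenvalue m t k l = 0 :=
  if_neg fun hkl => h hkl.2

lemma zonalEigenvalue_self (t : ℝ) (l : ℕ) : zonalEigenvalue m t l l = gaussianMoment m l := by
  simpa using zonalEigenvalue_add_two_mul (m := m) t l 0

lemma zonalEigenvalue_recurrence_of_le (t c : ℝ) (l n : ℕ) :
    ((l + 2 * n : ℕ) + 2 : ℝ) * zonalEigenvalue m t (l + 2 * n + 2) l =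
      2 * ((l + 2 * n : ℕ) + 1 + m / 2) *
        (zonalEigenvalue m t (l + 2 * n + 1) (l + 1) * (t - c * (l * t))
          + c * ((m + (l + 2 * n + 1 + (l - 1) : ℕ)) * l *
              zonalEigenvalue m t (l + 2 * n + 1) (l - 1)))
      - ((l + 2 * n : ℕ) + m) * t * ((m + (l + 2 * n + l : ℕ)) *
          zonalEigenvalue m t (l + 2 * n) l) := by
  have hsucc := gaussianMoment_succ m (l + n)
  have h₁ := zonalEigenvalue_add_two_mul (m := m) t l (n + 1)
  have h₂ := zonalEigenvalue_add_two_mul (m := m) t (l + 1) n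
  rw [show l + 2 * (n + 1) = l + 2 * n + 2 by ring, ← add_assoc, hsucc] at h₁
  rw [add_right_comm, add_right_comm l 1 n, hsucc] at h₂
  rw [h₁, h₂, zonalEigenvalue_add_two_mul]
  rcases l with _ | l
  · push_cast
    ring
  · have h₃ := zonalEigenvalue_add_two_mul (m := m) t l (n + 1)
    rw [show l + 2 * (n + 1) = l + 1 + 2 * n + 1 by ring, ← add_assoc] at h₃
    rw [Nat.add_sub_cancel, h₃, add_right_comm l n 1]
    push_cast
    ring

lemma zonalEigenvalue_recurrence (hm : 0 < m) (t : ℝ) (k l : ℕ) :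
    ((k : ℝ) + 2) * zonalEigenvalue m t (k + 2) l =
      2 * (k + 1 + m / 2) *
        (zonalEigenvalue m t (k + 1) (l + 1) * (t - ((m : ℝ) + 2 * l - 2)⁻¹ * (l * t))
          + ((m : ℝ) + 2 * l - 2)⁻¹ * ((m + (k + 1 + (l - 1) : ℕ)) * l *
              zonalEigenvalue m t (k + 1) (l - 1)))
      - (k + m) * t * ((m + (k + l : ℕ)) * zonalEigenvalue m t k l) := by
  rcases le_or_gt l k with hle | hlt
  · by_cases heven : Even (k + l)
    · obtain ⟨n, rfl⟩ : ∃ n, k = l + 2 * n := ⟨(k - l) / 2, by grind⟩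
      exact zonalEigenvalue_recurrence_of_le t _ l n
    · have hpred : (l : ℝ) * zonalEigenvalue m t (k + 1) (l - 1) = 0 := by
        rcases l with _ | l
        · simp
        · rw [zonalEigenvalue_of_not_even t (by grind), mul_zero]
      rw [zonalEigenvalue_of_not_even t heven,
        zonalEigenvalue_of_not_even (k := k + 2) t (by grind),
        zonalEigenvalue_of_not_even (k := k + 1) (l := l + 1) t (by grind),
        mul_assoc _ (l : ℝ), hpred]
      ring
  · obtain ⟨l, rfl⟩ : ∃ l', l = l' + 1 := ⟨l - 1, by omega⟩
    rw [zonalEigenvalue_of_lt (k := k) t (by omega),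
      zonalEigenvalue_of_lt (k := k + 1) (l := l + 1 + 1) t (by omega), Nat.add_sub_cancel]
    rcases lt_trichotomy l (k + 1) with hl | rfl | hl
    · obtain rfl : l = k := by omega
      rw [zonalEigenvalue_of_not_even t (by grind), zonalEigenvalue_of_not_even t (by grind)]
      ring
    · have hne : (m : ℝ) + 2 * (k + 1) ≠ 0 := by positivity
      have hsucc := gaussianMoment_succ m (k + 1)
      rw [zonalEigenvalue_self, zonalEigenvalue_self, hsucc,
        show (m : ℝ) + 2 * (k + 1 + 1 : ℕ) - 2 = m + 2 * (k + 1) by push_cast; ring]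
      push_cast
      field_simp
      ring
    · rw [zonalEigenvalue_of_lt t (by omega), zonalEigenvalue_of_lt t hl]
      ring

lemma add_two_mul_solidZonal (k : ℕ) (x y : Fin m → ℝ) :
    ((k : ℝ) + 2) * solidZonal (k + 2) x y =
      2 * (k + 1 + m / 2) * ip x y * solidZonal (k + 1) x y
        - (k + m) * (ip x x * ip y y) * solidZonal k x y := by
  rw [solidZonal, add_two_mul_zonal, mul_div_cancel₀ (m : ℝ) two_ne_zero]
  rfl

lemma solidZonal_zero (x y : Fin m → ℝ) : solidZonal 0 x y = 1 := rfl

lemma solidZonal_one (x y : Fin m → ℝ) : solidZonal 1 x y = m * ip x y := by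
  rw [solidZonal, zonal, mul_div_cancel₀ (m : ℝ) two_ne_zero]

lemma isHomog_solidZonal (k : ℕ) (y : Fin m → ℝ) : IsHomog k fun x => solidZonal k x y := by
  induction k using Nat.twoStepInduction with
  | zero => exact .const 1
  | one =>
    simp only [solidZonal_one]
    exact (isHomog_ip y).const_smul (m : ℝ)
  | more k ih₀ ih₁ =>
    have hip : IsHomog (k + 2) fun x => ip x y • solidZonal (k + 1) x y :=
      add_comm 1 (k + 1) ▸ (isHomog_ip y).smul ih₁
    have hsq : IsHomog (k + 2) fun x => ip x x • solidZonal k x y :=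
      add_comm 2 k ▸ isHomog_ip_self.smul ih₀
    convert ((hip.const_smul (2 * (k + 1 + m / 2))).add
      (hsq.const_smul (-(k + m) * ip y y))).const_smul ((k : ℝ) + 2)⁻¹ using 2 with x
    rw [eq_inv_smul_iff₀ (by positivity), smul_eq_mul, add_two_mul_solidZonal]
    simp only [smul_eq_mul]
    ring

lemma IsHomog.integral_solidZonal_add_two_smul {l : ℕ} {f : (Fin m → ℝ) → V} (hf : IsHomog l f)
    (k : ℕ) (y : Fin m → ℝ) :
    ((k : ℝ) + 2) • ∫ x, gaussian x • solidZonal (k + 2) x y • f x =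
      (2 * ((k : ℝ) + 1 + m / 2)) • (∫ x, gaussian x • solidZonal (k + 1) x y • ip x y • f x)
      - ((k + m) * ip y y * (m + (k + l : ℕ))) • ∫ x, gaussian x • solidZonal k x y • f x := by
  have hip := ((isHomog_solidZonal (k + 1) y).smul ((isHomog_ip y).smul hf)).integrable
  have hZ := (isHomog_solidZonal k y).smul hf
  rw [mul_smul _ ((m : ℝ) + _), ← integral_gaussian_smul_ip_self_smul hZ, ← integral_smul,
    ← integral_smul, ← integral_smul, ← integral_sub (hip.fun_smul _)
      ((isHomog_ip_self.smul hZ).integrable.fun_smul _)]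
  congr 1 with x
  simp only [smul_smul, ← sub_smul]
  congr 1
  linear_combination gaussian x * add_two_mul_solidZonal k x y

lemma IsHomog.integral_solidZonal_smul_ip_smul {l : ℕ} {f : (Fin m → ℝ) → V}
    (hf : IsHomog l f) {y : Fin m → ℝ} (hraise : IsHomog (l + 1) (harmonicRaise y l f)) (k : ℕ) :
    ∫ x, gaussian x • solidZonal k x y • ip x y • f x =
      (∫ x, gaussian x • solidZonal k x y • harmonicRaise y l f x)
      + (((m : ℝ) + 2 * l - 2)⁻¹ * (m + (k + (l - 1) : ℕ))) •
        ∫ x, gaussian x • solidZonal k x y • dirDeriv y f x := by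
  have hZ := (isHomog_solidZonal k y).smul (hf.dirDeriv y)
  have hZraise := (isHomog_solidZonal k y).smul hraise
  rw [mul_smul, ← integral_gaussian_smul_ip_self_smul hZ, ← integral_smul,
    ← integral_add hZraise.integrable ((isHomog_ip_self.smul hZ).integrable.fun_smul _)]
  congr 1 with x
  simp only [harmonicRaise]
  module

lemma IsSolidHarmonic.integral_solidZonal_zero_smul [CompleteSpace V] {l : ℕ}
    {f : (Fin m → ℝ) → V} (hf : IsSolidHarmonic l f) (y : Fin m → ℝ) :
    ∫ x, gaussian x • solidZonal 0 x y • f x = zonalEigenvalue m (ip y y) 0 l • f y := by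
  simp only [solidZonal_zero, one_smul]
  rcases l with _ | l
  · rw [zonalEigenvalue_self, gaussianMoment_zero, ← integral_gaussian_weight,
      ← integral_smul_const]
    simp only [hf.eq_apply_zero _]
  · rw [zonalEigenvalue_of_lt _ l.succ_pos, zero_smul, hf.integral_eq_zero l.succ_ne_zero]

lemma IsSolidHarmonic.integral_solidZonal_one_smul [CompleteSpace V] {l : ℕ}
    {f : (Fin m → ℝ) → V} (hf : IsSolidHarmonic l f) (y : Fin m → ℝ) :
    ∫ x, gaussian x • solidZonal 1 x y • f x = zonalEigenvalue m (ip y y) 1 l • f y := by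
  have hzero := (hf.dirDeriv y).integral_solidZonal_zero_smul y
  simp only [solidZonal_zero, one_smul, ← integral_gaussian_smul_ip_smul hf.toIsHomog] at hzero
  simp only [solidZonal_one, mul_smul, smul_comm (gaussian _) (m : ℝ), integral_smul, hzero,
    hf.dirDeriv_self]
  rcases l with _ | _ | l
  · rw [zonalEigenvalue_of_not_even (k := 1) _ (by decide), Nat.cast_zero]
    module
  · have hsucc := gaussianMoment_succ m 0
    rw [zonalEigenvalue_self, zonalEigenvalue_self, hsucc]
    module
  · rw [zonalEigenvalue_of_lt _ (by omega), zonalEigenvalue_of_lt _ (by omega)]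
    module

theorem IsSolidHarmonic.integral_solidZonal_smul [CompleteSpace V] (hm : 0 < m) {l : ℕ}
    {f : (Fin m → ℝ) → V} (hf : IsSolidHarmonic l f) (k : ℕ) (y : Fin m → ℝ) :
    ∫ x, gaussian x • solidZonal k x y • f x = zonalEigenvalue m (ip y y) k l • f y := by
  induction k using Nat.twoStepInduction generalizing l f with
  | zero => exact hf.integral_solidZonal_zero_smul y
  | one => exact hf.integral_solidZonal_one_smul y
  | more k ih₀ ih₁ =>
    have hraise := hf.harmonicRaise hm y
    have hraise_apply : harmonicRaise y l f y =
        (ip y y - ((m : ℝ) + 2 * l - 2)⁻¹ * (l * ip y y)) • f y := by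
      rw [harmonicRaise, hf.dirDeriv_self]
      module
    refine smul_right_injective V (show (k : ℝ) + 2 ≠ 0 by positivity) ?_
    simp only
    rw [hf.integral_solidZonal_add_two_smul, hf.integral_solidZonal_smul_ip_smul hraise.toIsHomog,
      ih₁ hraise, ih₁ (hf.dirDeriv y), ih₀ hf, smul_smul _ (zonalEigenvalue _ _ (k + 2) l),
      zonalEigenvalue_recurrence hm, hraise_apply, hf.dirDeriv_self]
    module

end FunkHecke

/-! ### Spherical monogenics -/

section Monogenic

variable {l : ℕ} {M : (Fin m → ℝ) → Cl m}

lemma IsHomog.mul {d d' : ℕ} {f g : (Fin m → ℝ) → Cl m} (hf : IsHomog d f) (hg : IsHomog d' g) :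
    IsHomog (d + d') fun x => f x * g x :=
  hf.bilinear (mulL m) hg

lemma dirDeriv_const_mul (a : Cl m) {f : (Fin m → ℝ) → Cl m} (hf : Differentiable ℝ f)
    (v : Fin m → ℝ) : dirDeriv v (fun x => a * f x) = fun x => a * dirDeriv v f x := by
  ext1 x
  exact congrArg (· v) ((mulL m a).hasFDerivAt.comp x (hf x).hasFDerivAt).fderiv

lemma dirac_dirac {d : ℕ} {f : (Fin m → ℝ) → Cl m} (hf : IsHomog d f) (x : Fin m → ℝ) :
    dirac (dirac f) x = -laplacian f x := by
  let D (i : Fin m) (g : (Fin m → ℝ) → Cl m) := dirDeriv (Pi.single i 1) g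
  have hterm (i : Fin m) : IsHomog (0 + (d - 1)) fun x => e m i * D i f x :=
    (IsHomog.const (e m i)).mul (hf.dirDeriv _)
  have hexpand : dirac (dirac f) x = ∑ i, ∑ j, e m i * (e m j * D i (D j f) x) := by
    change ∑ i, e m i * D i (fun x => ∑ j, e m j * D j f x) x = _
    simp only [D, dirDeriv_sum fun i _ => (hterm i).differentiable,
      dirDeriv_const_mul _ (hf.dirDeriv _).differentiable, Finset.mul_sum]
  have hoffdiag (i j : Fin m) : (if i < j then
      e m i * (e m j * D i (D j f) x) + e m j * (e m i * D j (D i f) x) else 0) = 0 := by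
    split_ifs with hij
    · simp only [D, dirDeriv_comm hf.contDiff (Pi.single j 1), ← mul_assoc, e_mul_e_of_lt hij,
        neg_mul, add_neg_cancel]
    · rfl
  rw [hexpand, sum_sum_eq_sum_diag_add_sum_lt, laplacian, ← Finset.sum_neg_distrib]
  simp only [hoffdiag, Finset.sum_const_zero, add_zero]
  simp only [← mul_assoc, e_mul_self, neg_one_mul, D]

/-- Spherical monogenics of degree `l`: the smooth homogeneous functions of degree `l` that are
annihilated by the Dirac operator. -/
structure IsMonogenic (l : ℕ) (M : (Fin m → ℝ) → Cl m) : Prop extends IsHomog l M where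
  dirac_eq_zero : dirac M = 0

namespace IsMonogenic

lemma isSolidHarmonic (hM : IsMonogenic l M) : IsSolidHarmonic l M := by
  refine ⟨hM.toIsHomog, funext fun x => neg_eq_zero.mp ?_⟩
  rw [← dirac_dirac hM.toIsHomog, hM.dirac_eq_zero]
  simp [dirac, pder]

lemma isSolidHarmonic_vec_mul (hM : IsMonogenic l M) :
    IsSolidHarmonic (1 + l) fun x => vec m x * M x := by
  have hvec : vec m = Fintype.linearCombination ℝ (e m) := funext vec_eq_sum
  refine ⟨isHomog_vec.mul hM.toIsHomog,
    (laplacian_bilinear (mulL m) isHomog_vec hM.toIsHomog).trans (funext fun x => ?_)⟩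
  have hdirac : ∑ i, e m i * dirDeriv (Pi.single i 1) M x = 0 := congrFun hM.dirac_eq_zero x
  simp only [hvec, laplacian_linearMap, dirDeriv_linearMap, hM.isSolidHarmonic.laplacian_eq_zero,
    Fintype.linearCombination_apply_single, one_smul, mulL_apply, hdirac, Pi.zero_apply, zero_mul,
    mul_zero, add_zero, smul_zero]

end IsMonogenic

lemma zonalEigenvalue_succ_sub (t : ℝ) (k l : ℕ) :
    zonalEigenvalue m t (k + 1) l - t * zonalEigenvalue m t k (l + 1) =
      if k + 1 = l then gaussianMoment m l else 0 := by
  rcases lt_trichotomy (k + 1) l with hlt | rfl | hlt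
  · rw [zonalEigenvalue_of_lt t hlt, zonalEigenvalue_of_lt t (by omega), if_neg hlt.ne]
    ring
  · rw [zonalEigenvalue_self, zonalEigenvalue_of_lt t (by omega), if_pos rfl]
    ring
  rw [if_neg hlt.ne']
  by_cases heven : Even (k + 1 + l)
  · obtain ⟨n, rfl⟩ : ∃ n, k = l + 1 + 2 * n := ⟨(k - l - 1) / 2, by grind⟩
    have hdiag := zonalEigenvalue_add_two_mul (m := m) t l (n + 1)
    rw [show l + 2 * (n + 1) = l + 1 + 2 * n + 1 by ring, ← add_assoc] at hdiag
    rw [hdiag, zonalEigenvalue_add_two_mul, add_right_comm]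
    ring
  · rw [zonalEigenvalue_of_not_even t heven, zonalEigenvalue_of_not_even t (by grind)]
    ring

lemma zonalEigenvalue_succ_succ (t : ℝ) (k l : ℕ) :
    zonalEigenvalue m t (k + 1) (l + 1) = (m + (k + l : ℕ)) * zonalEigenvalue m t k l := by
  by_cases hkl : l ≤ k ∧ Even (k + l)
  · obtain ⟨n, rfl⟩ : ∃ n, k = l + 2 * n := ⟨(k - l) / 2, by grind⟩
    have hsucc := gaussianMoment_succ m (l + n)
    rw [add_right_comm, zonalEigenvalue_add_two_mul, zonalEigenvalue_add_two_mul,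
      add_right_comm l 1 n, hsucc]
    push_cast
    ring
  · rw [zonalEigenvalue, zonalEigenvalue, if_neg (by grind), if_neg hkl, mul_zero]

lemma Cl.integrable_const_mul (a : Cl m) {F : (Fin m → ℝ) → Cl m} (hF : Integrable F) :
    Integrable fun x => a * F x :=
  (mulL m a).integrable_comp hF

lemma Cl.integral_const_mul (a : Cl m) {F : (Fin m → ℝ) → Cl m} (hF : Integrable F) :
    ∫ x, a * F x = a * ∫ x, F x :=
  (mulL m a).integral_comp_comm hF

lemma isHomog_monogenicKernel (y : Fin m → ℝ) (k : ℕ) :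
    IsHomog k fun x => monogenicKernel x y k := by
  rcases k with _ | k
  · exact .const 1
  · exact ((isHomog_solidZonal (k + 1) y).smul (.const 1)).add
      ((isHomog_solidZonal k y).smul ((IsHomog.const (vec m y)).mul isHomog_vec))

lemma isHomog_kernelTerm (u : ℂ) (y : Fin m → ℝ) (k : ℕ) :
    IsHomog k fun x => kernelTerm u x y k := by
  rcases k with _ | k
  · exact .const 1
  · have hmul := ((IsHomog.const (vec m y)).mul (isHomog_monogenicKernel y k)).mul isHomog_vec
    rw [zero_add] at hmul
    exact ((isHomog_monogenicKernel y (k + 1)).const_smul _).add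
      (hmul.clm_comp (u • ContinuousLinearMap.id ℝ (Cl m)))

namespace IsMonogenic

lemma integral_monogenicKernel_mul (hm : 0 < m) (hM : IsMonogenic l M) (y : Fin m → ℝ) (k : ℕ) :
    ∫ x, gaussian x • (monogenicKernel x y k * M x) =
      if k = l then gaussianMoment m l • M y else 0 := by
  have hH := hM.isSolidHarmonic
  have hvH := hM.isSolidHarmonic_vec_mul
  rcases k with _ | k
  · have hzero := hH.integral_solidZonal_smul hm 0 y
    simp only [solidZonal_zero, one_smul] at hzero
    simp only [monogenicKernel, one_mul, hzero]
    rcases l with _ | l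
    · rw [zonalEigenvalue_self, if_pos rfl]
    · rw [zonalEigenvalue_of_lt _ l.succ_pos, if_neg l.succ_ne_zero.symm, zero_smul]
  · have hexpand (x : Fin m → ℝ) : gaussian x • (monogenicKernel x y (k + 1) * M x) =
        gaussian x • solidZonal (k + 1) x y • M x
          + vec m y * (gaussian x • solidZonal k x y • (vec m x * M x)) := by
      simp only [monogenicKernel, add_mul, smul_mul_assoc, one_mul, smul_add, mul_assoc,
        mul_smul_comm]
    have hint₁ := ((isHomog_solidZonal (k + 1) y).smul hH.toIsHomog).integrable
    have hint₂ := ((isHomog_solidZonal k y).smul hvH.toIsHomog).integrable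
    simp only [hexpand]
    rw [integral_add hint₁ (Cl.integrable_const_mul (vec m y) hint₂), Cl.integral_const_mul _ hint₂,
      hH.integral_solidZonal_smul hm, hvH.integral_solidZonal_smul hm, mul_smul_comm, ← mul_assoc,
      vec_mul_self, neg_mul, smul_mul_assoc, one_mul, smul_neg, smul_smul, ← sub_eq_add_neg,
      ← sub_smul, mul_comm _ (ip y y), add_comm 1 l, zonalEigenvalue_succ_sub, ite_smul, zero_smul]

lemma integral_monogenicKernel_mul_vec_mul (hm : 0 < m) (hM : IsMonogenic l M) (y : Fin m → ℝ)
    (k : ℕ) : ∫ x, gaussian x • (monogenicKernel x y k * (vec m x * M x)) = 0 := by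
  have hH := hM.isSolidHarmonic
  have hvH := hM.isSolidHarmonic_vec_mul
  rcases k with _ | k
  · simpa only [monogenicKernel, one_mul] using hvH.integral_eq_zero (by omega)
  · have hexpand (x : Fin m → ℝ) : gaussian x • (monogenicKernel x y (k + 1) * (vec m x * M x)) =
        gaussian x • solidZonal (k + 1) x y • (vec m x * M x)
          - vec m y * (gaussian x • ip x x • solidZonal k x y • M x) := by
      simp only [monogenicKernel, add_mul, smul_mul_assoc, one_mul, mul_assoc, mul_smul_comm,
        ← mul_assoc (vec m x) (vec m x), vec_mul_self, neg_mul, mul_neg]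
      module
    have hint₁ := ((isHomog_solidZonal (k + 1) y).smul hvH.toIsHomog).integrable
    have hZM := (isHomog_solidZonal k y).smul hH.toIsHomog
    have hint₂ := (isHomog_ip_self.smul hZM).integrable
    simp only [hexpand]
    rw [integral_sub hint₁ (Cl.integrable_const_mul (vec m y) hint₂), Cl.integral_const_mul _ hint₂,
      integral_gaussian_smul_ip_self_smul hZM, hH.integral_solidZonal_smul hm,
      hvH.integral_solidZonal_smul hm, add_comm 1 l, zonalEigenvalue_succ_succ, mul_smul_comm,
      mul_smul_comm, smul_smul, sub_self]

lemma integral_kernelTerm_mul (hm : 0 < m) (hM : IsMonogenic l M) (u : ℂ) (y : Fin m → ℝ) (k : ℕ) :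
    ∫ x, gaussian x • (kernelTerm u x y k * M x) =
      if k = l then (-1 : ℂ) ^ l • gaussianMoment m l • M y else 0 := by
  rcases k with _ | k
  · have hzero := hM.integral_monogenicKernel_mul hm y 0
    simp only [monogenicKernel, one_mul] at hzero
    simp only [kernelTerm, one_mul, hzero]
    split_ifs with hl
    · rw [← hl, pow_zero, one_smul]
    · rfl
  · have hexpand (x : Fin m → ℝ) : gaussian x • (kernelTerm u x y (k + 1) * M x) =
        (-1 : ℝ) ^ (k + 1) • gaussian x • (monogenicKernel x y (k + 1) * M x)
          + u • (vec m y * gaussian x • (monogenicKernel x y k * (vec m x * M x))) := by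
      simp only [kernelTerm, add_mul, smul_mul_assoc, mul_assoc, smul_add, mul_smul_comm,
        smul_comm (gaussian x)]
    have hint₁ := ((isHomog_monogenicKernel y (k + 1)).mul hM.toIsHomog).integrable
    have hint₂ := ((isHomog_monogenicKernel y k).mul (isHomog_vec.mul hM.toIsHomog)).integrable
    simp only [hexpand]
    rw [integral_add (hint₁.fun_smul _) ((Cl.integrable_const_mul (vec m y) hint₂).fun_smul u),
      integral_smul, integral_smul, Cl.integral_const_mul _ hint₂,
      hM.integral_monogenicKernel_mul hm, hM.integral_monogenicKernel_mul_vec_mul hm,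
      mul_zero, smul_zero, add_zero]
    split_ifs with hl
    · rw [← hl, ← ofReal_smul]
      push_cast
      rfl
    · rw [smul_zero]

lemma integral_kernelTerm_mul_vec_mul (hm : 0 < m) (hM : IsMonogenic l M) (u : ℂ) (y : Fin m → ℝ)
    (k : ℕ) : ∫ x, gaussian x • (kernelTerm u x y k * (vec m x * M x)) =
      if k = l + 1 then -u • gaussianMoment m (l + 1) • (vec m y * M y) else 0 := by
  have hvM := isHomog_vec.mul hM.toIsHomog
  rcases k with _ | k
  · rw [if_neg l.succ_ne_zero.symm]
    simpa only [kernelTerm, one_mul] using hM.isSolidHarmonic_vec_mul.integral_eq_zero (by omega)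
  · have hexpand (x : Fin m → ℝ) : gaussian x • (kernelTerm u x y (k + 1) * (vec m x * M x)) =
        (-1 : ℝ) ^ (k + 1) • gaussian x • (monogenicKernel x y (k + 1) * (vec m x * M x))
          + -u • (vec m y * gaussian x • ip x x • (monogenicKernel x y k * M x)) := by
      simp only [kernelTerm, add_mul, smul_mul_assoc, mul_assoc, smul_add, mul_smul_comm,
        smul_comm (gaussian x), ← mul_assoc (vec m x) (vec m x), vec_mul_self, neg_mul, mul_neg,
        one_mul, smul_neg, neg_smul]
    have hRM := (isHomog_monogenicKernel y k).mul hM.toIsHomog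
    have hint₁ := ((isHomog_monogenicKernel y (k + 1)).mul hvM).integrable
    have hint₂ := (isHomog_ip_self.smul hRM).integrable
    simp only [hexpand]
    rw [integral_add (hint₁.fun_smul _) ((Cl.integrable_const_mul (vec m y) hint₂).fun_smul (-u)),
      integral_smul, integral_smul, Cl.integral_const_mul _ hint₂,
      hM.integral_monogenicKernel_mul_vec_mul hm, integral_gaussian_smul_ip_self_smul hRM,
      hM.integral_monogenicKernel_mul hm, smul_zero, zero_add]
    simp only [Nat.add_right_cancel_iff]
    split_ifs with hl
    · have hsucc := gaussianMoment_succ m l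
      rw [hl, smul_smul, mul_smul_comm, hsucc]
      push_cast
      ring_nf
    · simp only [smul_zero, mul_zero]

end IsMonogenic

end Monogenic

/-! ### The kernel as a double series -/

section KernelSeries

/-- The coefficient of `t^{2s}` in the power series of `t^{-a} J_a(t)`. -/
def besselCoeff (a : ℝ) (s : ℕ) : ℝ :=
  (-1 / 4) ^ s / (s.factorial * Real.Gamma (s + a + 1) * 2 ^ a)

lemma besselJt_eq_tsum (a t : ℝ) : besselJt a t = ∑' s : ℕ, besselCoeff a s * (t ^ 2) ^ s := by
  refine tsum_congr fun s => ?_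
  rw [besselCoeff, div_mul_eq_mul_div, ← mul_pow, pow_mul, ← mul_pow]
  congr 2
  ring

lemma factorial_mul_Gamma_le {a : ℝ} (ha : 0 ≤ a) (n : ℕ) :
    n.factorial * Real.Gamma (a + 1) ≤ Real.Gamma (n + a + 1) := by
  induction n with
  | zero => simp
  | succ n ih =>
    have hpos : 0 < (n : ℝ) + a + 1 := by positivity
    rw [show ((n + 1 : ℕ) : ℝ) + a + 1 = (n + a + 1) + 1 by push_cast; ring,
      Real.Gamma_add_one hpos.ne', Nat.factorial_succ, Nat.cast_mul, mul_assoc]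
    gcongr
    push_cast
    linarith

lemma factorial_two_mul_le (s : ℕ) : (2 * s).factorial ≤ 4 ^ s * s.factorial ^ 2 := by
  have hchoose : (2 * s).choose s ≤ 4 ^ s :=
    (Nat.choose_le_two_pow _ _).trans_eq (by rw [pow_mul]; rfl)
  have hfac := Nat.choose_mul_factorial_mul_factorial (n := 2 * s) (k := s) (by lia)
  rw [show 2 * s - s = s by lia, mul_assoc, ← sq] at hfac
  exact hfac.symm.trans_le (Nat.mul_le_mul_right _ hchoose)

lemma abs_besselCoeff_le {lam : ℝ} (hlam : 0 ≤ lam) (k s : ℕ) :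
    |besselCoeff (k + lam) s| ≤
      (Real.Gamma (lam + 1))⁻¹ * (1 / (k.factorial * (2 * s).factorial)) := by
  have : 0 < Real.Gamma (lam + 1) := Real.Gamma_pos_of_pos (by positivity)
  have hfac : (k.factorial * (2 * s).factorial : ℝ) ≤
      4 ^ s * s.factorial * (s + k : ℕ).factorial := by
    have hmul : s.factorial * k.factorial ≤ (s + k).factorial :=
      Nat.le_of_dvd (Nat.factorial_pos _) (Nat.factorial_mul_factorial_dvd_factorial_add s k)
    exact_mod_cast calc
      k.factorial * (2 * s).factorial ≤ k.factorial * (4 ^ s * s.factorial ^ 2) := by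
        gcongr; exact factorial_two_mul_le s
      _ = 4 ^ s * s.factorial * (s.factorial * k.factorial) := by ring
      _ ≤ _ := by gcongr
  have hΓ : (s + k : ℕ).factorial * Real.Gamma (lam + 1) ≤ Real.Gamma (s + (k + lam) + 1) := by
    simpa only [Nat.cast_add, add_assoc] using factorial_mul_Gamma_le hlam (s + k)
  have hrpow : (1 : ℝ) ≤ 2 ^ ((k : ℝ) + lam) := Real.one_le_rpow one_le_two (by positivity)
  have : 0 < Real.Gamma (s + (k + lam) + 1) := Real.Gamma_pos_of_pos (by positivity)
  rw [besselCoeff, abs_div, abs_pow, abs_of_pos (a := _ * _ * _) (by positivity),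
    show |(-1 / 4 : ℝ)| = 1 / 4 by norm_num, div_pow, one_pow, div_div, one_div, one_div, ← mul_inv]
  refine inv_anti₀ (by positivity) ?_
  calc Real.Gamma (lam + 1) * (k.factorial * (2 * s).factorial)
      ≤ Real.Gamma (lam + 1) * (4 ^ s * s.factorial * (s + k : ℕ).factorial) := by gcongr
    _ = 4 ^ s * (s.factorial * ((s + k : ℕ).factorial * Real.Gamma (lam + 1)) * 1) := by ring
    _ ≤ 4 ^ s * (s.factorial * Real.Gamma (s + (k + lam) + 1) * 2 ^ ((k : ℝ) + lam)) := by gcongr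

lemma hasSum_exp_mul_cosh (t z : ℝ) :
    HasSum (fun p : ℕ × ℕ => t ^ p.1 / p.1.factorial * (z ^ (2 * p.2) / (2 * p.2).factorial))
      (Real.exp t * Real.cosh z) := by
  have hexp : HasSum (fun k : ℕ => t ^ k / k.factorial) (Real.exp t) := by
    rw [Real.exp_eq_exp_ℝ]
    exact NormedSpace.expSeries_div_hasSum_exp t
  have hcosh := Real.hasSum_cosh z
  exact HasSum.mul (f := fun k : ℕ => t ^ k / k.factorial)
    (g := fun s : ℕ => z ^ (2 * s) / (2 * s).factorial) hexp hcosh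
    (summable_mul_of_summable_norm (f := fun k : ℕ => t ^ k / k.factorial)
      (g := fun s : ℕ => z ^ (2 * s) / (2 * s).factorial) hexp.summable.norm hcosh.summable.norm)

lemma hasSum_mul_besselJt {lam : ℝ} (hlam : 0 ≤ lam) (z : ℝ) {a : ℕ → ℂ} {A t : ℝ}
    (ha : ∀ k, ‖a k‖ ≤ A * t ^ k) :
    HasSum (fun p : ℕ × ℕ => a p.1 * (besselCoeff (p.1 + lam) p.2 * (z ^ 2) ^ p.2 : ℝ))
      (∑' k : ℕ, a k * (besselJt (k + lam) z : ℝ)) := by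
  have hsummable :
      Summable fun p : ℕ × ℕ => a p.1 * (besselCoeff (p.1 + lam) p.2 * (z ^ 2) ^ p.2 : ℝ) := by
    refine .of_norm_bounded ((hasSum_exp_mul_cosh t z).summable.mul_left
      (A * (Real.Gamma (lam + 1))⁻¹)) fun p => ?_
    rw [norm_mul, Complex.norm_real, Real.norm_eq_abs, abs_mul,
      abs_of_nonneg (pow_nonneg (sq_nonneg z) _), ← pow_mul]
    have hA : 0 ≤ A * t ^ p.1 := (norm_nonneg _).trans (ha _)
    have hz : 0 ≤ z ^ (2 * p.2) := (even_two_mul _).pow_nonneg z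
    calc _ ≤ A * t ^ p.1 * ((Real.Gamma (lam + 1))⁻¹ *
            (1 / (p.1.factorial * (2 * p.2).factorial)) * z ^ (2 * p.2)) := by
          gcongr
          exacts [ha _, abs_besselCoeff_le hlam _ _]
      _ = _ := by field_simp
  convert hsummable.hasSum using 1
  rw [hsummable.tsum_prod]
  refine tsum_congr fun k => ?_
  simp only [tsum_mul_left, besselJt_eq_tsum, Complex.ofReal_tsum]

lemma abs_geg_le {μ w : ℝ} (hμ : 0 ≤ μ) (hw : |w| ≤ 1) (k : ℕ) :
    |geg μ k w| ≤ (3 * (1 + μ)) ^ k := by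
  induction k using Nat.twoStepInduction with
  | zero => simp [geg]
  | one =>
    rw [geg, abs_mul, abs_of_nonneg (by positivity), pow_one]
    nlinarith
  | more k ih₀ ih₁ =>
    set D := 3 * (1 + μ)
    have hD₁ : 1 ≤ D := by linarith
    have hkD : D ^ k ≤ D ^ (k + 1) := pow_le_pow_right₀ hD₁ k.le_succ
    rw [geg, abs_div, abs_of_pos (by positivity : (0 : ℝ) < k + 2), div_le_iff₀ (by positivity)]
    calc _ ≤ |2 * ((k : ℝ) + 1 + μ) * w * geg μ (k + 1) w| + |((k : ℝ) + 2 * μ) * geg μ k w| :=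
          abs_sub _ _
      _ = 2 * ((k : ℝ) + 1 + μ) * |w| * |geg μ (k + 1) w| + ((k : ℝ) + 2 * μ) * |geg μ k w| := by
          simp only [abs_mul, abs_two, abs_of_nonneg (by positivity : 0 ≤ (k : ℝ) + 1 + μ),
            abs_of_nonneg (by positivity : 0 ≤ (k : ℝ) + 2 * μ)]
      _ ≤ 2 * ((k : ℝ) + 1 + μ) * 1 * D ^ (k + 1) + ((k : ℝ) + 2 * μ) * D ^ (k + 1) := by
          gcongr
          exact ih₀.trans hkD
      _ = (2 * ((k : ℝ) + 1 + μ) + ((k : ℝ) + 2 * μ)) * D ^ (k + 1) := by ring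
      _ ≤ (D * (k + 2)) * D ^ (k + 1) := by
          gcongr
          nlinarith [mul_nonneg hμ k.cast_nonneg]
      _ = D ^ (k + 2) * (k + 2) := by ring

lemma abs_pow_mul_geg_le {μ ν w z : ℝ} (hμ : 0 ≤ μ) (hμν : μ ≤ ν) (hw : |w| ≤ 1) (hz : 0 ≤ z)
    {i n k : ℕ} (hi : i ≤ k) (hn : n ≤ k) :
    |z ^ n * geg μ i w| ≤ (3 * (1 + ν) * (1 + z)) ^ k := by
  have hν : 0 ≤ ν := hμ.trans hμν
  have hgeg : |geg μ i w| ≤ (3 * (1 + ν)) ^ k :=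
    calc _ ≤ (3 * (1 + μ)) ^ i := abs_geg_le hμ hw i
      _ ≤ (3 * (1 + ν)) ^ i := by gcongr
      _ ≤ (3 * (1 + ν)) ^ k := pow_le_pow_right₀ (by linarith) hi
  have hpow : z ^ n ≤ (1 + z) ^ k :=
    calc _ ≤ (1 + z) ^ n := by gcongr; linarith
      _ ≤ (1 + z) ^ k := pow_le_pow_right₀ (by linarith) hn
  rw [abs_mul, abs_of_nonneg (pow_nonneg hz n), mul_comm, mul_pow]
  gcongr

lemma abs_pow_mul_gegT_le {lam w z : ℝ} (hlam : 0 ≤ lam) (hw : |w| ≤ 1) (hz : 0 ≤ z) (k : ℕ) :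
    |z ^ k * gegT lam k w| ≤ 2 * (3 * (1 + (lam + 1)) * (1 + z)) ^ k := by
  have hlam' : 0 ≤ lam + 1 := by linarith
  have htail : |z ^ k * if 2 ≤ k then geg (lam + 1) (k - 2) w else 0| ≤
      (3 * (1 + (lam + 1)) * (1 + z)) ^ k := by
    split_ifs
    · exact abs_pow_mul_geg_le hlam' le_rfl hw hz (Nat.sub_le k 2) le_rfl
    · rw [mul_zero, abs_zero]
      positivity
  rw [gegT, mul_sub, two_mul]
  exact (abs_sub _ _).trans
    (add_le_add (abs_pow_mul_geg_le hlam' le_rfl hw hz le_rfl le_rfl) htail)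

lemma abs_pow_sub_one_mul_geg_le {lam w z : ℝ} (hlam : 0 ≤ lam) (hw : |w| ≤ 1) (hz : 0 ≤ z)
    (k : ℕ) : |z ^ (k - 1) * if 1 ≤ k then geg (lam + 1) (k - 1) w else 0| ≤
      (3 * (1 + (lam + 1)) * (1 + z)) ^ k := by
  split_ifs
  · exact abs_pow_mul_geg_le (by linarith) le_rfl hw hz (Nat.sub_le k 1) (Nat.sub_le k 1)
  · rw [mul_zero, abs_zero]
    positivity

lemma norm_add_neg_one_pow_le (u : ℂ) (k : ℕ) : ‖u + (-1) ^ k‖ ≤ ‖u‖ + 1 := by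
  simpa using norm_add_le u ((-1) ^ k)

lemma norm_sub_neg_one_pow_le (u : ℂ) (k : ℕ) : ‖u - (-1) ^ k‖ ≤ ‖u‖ + 1 := by
  simpa using norm_sub_le u ((-1) ^ k)

lemma abs_ip_le (x y : Fin m → ℝ) : |ip x y| ≤ nrm x * nrm y := by
  rw [nrm, nrm, ← Real.sqrt_mul (ip_self_nonneg x)]
  refine Real.abs_le_sqrt ?_
  simpa only [ip, sq] using Finset.sum_mul_sq_le_sq_mul_sq Finset.univ x y

lemma abs_ip_div_le_one (x y : Fin m → ℝ) : |ip x y / (nrm x * nrm y)| ≤ 1 := by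
  have hnonneg : 0 ≤ nrm x * nrm y := (abs_nonneg _).trans (abs_ip_le x y)
  rw [abs_div, abs_of_nonneg hnonneg]
  exact div_le_one_of_le₀ (abs_ip_le x y) hnonneg

lemma nrm_mul_nrm_mul_ip_div (x y : Fin m → ℝ) :
    nrm x * nrm y * (ip x y / (nrm x * nrm y)) = ip x y :=
  mul_div_cancel_of_imp' fun h => abs_nonpos_iff.mp ((abs_ip_le x y).trans_eq h)

end KernelSeries

section KernelExpansion

/-- The coefficient of `z^{2s}` in the power series of `2^λ Γ(λ+1) z^{-k-λ} J_{k+λ}(z)`. -/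
def kernelCoeff (lam : ℝ) (k s : ℕ) : ℝ :=
  2 ^ lam * Real.Gamma (lam + 1) * besselCoeff (k + lam) s

variable {lam w z : ℝ}

lemma abs_kernelCoeff_le (hlam : 0 ≤ lam) (k s : ℕ) :
    |kernelCoeff lam k s| ≤ 2 ^ lam * (1 / (k.factorial * (2 * s).factorial)) := by
  have hGamma : 0 < Real.Gamma (lam + 1) := Real.Gamma_pos_of_pos (by positivity)
  rw [kernelCoeff, abs_mul, abs_of_pos (by positivity), mul_assoc]
  gcongr
  rw [← le_inv_mul_iff₀ hGamma]
  exact abs_besselCoeff_le hlam k s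

lemma hasSum_mul_kernelCoeff (hlam : 0 ≤ lam) (z : ℝ) {a : ℕ → ℂ} {A t : ℝ}
    (ha : ∀ k, ‖a k‖ ≤ A * t ^ k) :
    HasSum (fun p : ℕ × ℕ => a p.1 * (kernelCoeff lam p.1 p.2 * (z ^ 2) ^ p.2 : ℝ))
      ((2 ^ lam * Real.Gamma (lam + 1) : ℝ) * ∑' k : ℕ, a k * (besselJt (k + lam) z : ℝ)) := by
  have hterm (p : ℕ × ℕ) : a p.1 * (kernelCoeff lam p.1 p.2 * (z ^ 2) ^ p.2 : ℝ) =
      (2 ^ lam * Real.Gamma (lam + 1) : ℝ) *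
        (a p.1 * (besselCoeff (p.1 + lam) p.2 * (z ^ 2) ^ p.2 : ℝ)) := by
    rw [kernelCoeff]
    push_cast
    ring
  simp_rw [hterm]
  exact (hasSum_mul_besselJt hlam z ha).mul_left _

lemma two_mul_ofReal_two_rpow_sub_one_mul (lam c : ℝ) :
    2 * ((2 ^ (lam - 1) * c : ℝ) : ℂ) = (2 ^ lam * c : ℝ) := by
  rw [Real.rpow_sub_one two_ne_zero]
  push_cast
  ring

lemma two_mul_AfunR (u : ℂ) (lam w z : ℝ) :
    2 * AfunR u lam w z = (2 ^ lam * Real.Gamma (lam + 1) : ℝ) *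
      ∑' k : ℕ, (u + (-1) ^ k) * (z ^ k * geg lam k w : ℝ) * (besselJt (k + lam) z : ℝ) := by
  rw [AfunR, ← mul_assoc, two_mul_ofReal_two_rpow_sub_one_mul]
  congr 1
  exact tsum_congr fun k => by push_cast; ring

lemma two_mul_BfunR (u : ℂ) (lam w z : ℝ) :
    2 * BfunR u lam w z = -((2 ^ lam * Real.Gamma (lam + 1) : ℝ) *
      ∑' k : ℕ, (u - (-1) ^ k) * (z ^ k * gegT lam k w : ℝ) * (besselJt (k + lam) z : ℝ)) := by
  rw [BfunR, neg_mul, mul_neg, ← mul_assoc, two_mul_ofReal_two_rpow_sub_one_mul]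
  congr 2
  exact tsum_congr fun k => by push_cast; ring

lemma CfunR_eq_neg (u : ℂ) (lam w z : ℝ) :
    CfunR u lam w z = -((2 ^ lam * Real.Gamma (lam + 1) : ℝ) *
      ∑' k : ℕ, (u + (-1) ^ k) *
        (z ^ (k - 1) * if 1 ≤ k then geg (lam + 1) (k - 1) w else 0 : ℝ) *
          (besselJt (k + lam) z : ℝ)) := by
  rw [CfunR, neg_mul]
  congr 2
  exact tsum_congr fun k => by push_cast; ring

lemma hasSum_two_mul_AfunR (u : ℂ) (hlam : 0 ≤ lam) (hw : |w| ≤ 1) (hz : 0 ≤ z) :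
    HasSum (fun p : ℕ × ℕ => (u + (-1) ^ p.1) * (z ^ p.1 * geg lam p.1 w : ℝ) *
      (kernelCoeff lam p.1 p.2 * (z ^ 2) ^ p.2 : ℝ)) (2 * AfunR u lam w z) := by
  have hbound (k : ℕ) : ‖(u + (-1) ^ k) * (z ^ k * geg lam k w : ℝ)‖ ≤
      (‖u‖ + 1) * (3 * (1 + (lam + 1)) * (1 + z)) ^ k := by
    rw [norm_mul, Complex.norm_real]
    gcongr
    · exact norm_add_neg_one_pow_le u k
    · exact abs_pow_mul_geg_le hlam (by linarith) hw hz le_rfl le_rfl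
  have hsum := hasSum_mul_kernelCoeff hlam z hbound
  rwa [← two_mul_AfunR] at hsum

lemma hasSum_two_mul_BfunR (u : ℂ) (hlam : 0 ≤ lam) (hw : |w| ≤ 1) (hz : 0 ≤ z) :
    HasSum (fun p : ℕ × ℕ => -((u - (-1) ^ p.1) * (z ^ p.1 * gegT lam p.1 w : ℝ) *
      (kernelCoeff lam p.1 p.2 * (z ^ 2) ^ p.2 : ℝ))) (2 * BfunR u lam w z) := by
  have hbound (k : ℕ) : ‖(u - (-1) ^ k) * (z ^ k * gegT lam k w : ℝ)‖ ≤
      (‖u‖ + 1) * 2 * (3 * (1 + (lam + 1)) * (1 + z)) ^ k := by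
    rw [norm_mul, Complex.norm_real, mul_assoc]
    gcongr
    exacts [norm_sub_neg_one_pow_le u k, abs_pow_mul_gegT_le hlam hw hz k]
  rw [two_mul_BfunR]
  exact (hasSum_mul_kernelCoeff hlam z hbound).neg

lemma hasSum_CfunR (u : ℂ) (hlam : 0 ≤ lam) (hw : |w| ≤ 1) (hz : 0 ≤ z) :
    HasSum (fun p : ℕ × ℕ => -((u + (-1) ^ p.1) *
      (z ^ (p.1 - 1) * if 1 ≤ p.1 then geg (lam + 1) (p.1 - 1) w else 0 : ℝ) *
      (kernelCoeff lam p.1 p.2 * (z ^ 2) ^ p.2 : ℝ))) (CfunR u lam w z) := by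
  have hbound (k : ℕ) :
      ‖(u + (-1) ^ k) * (z ^ (k - 1) * if 1 ≤ k then geg (lam + 1) (k - 1) w else 0 : ℝ)‖ ≤
        (‖u‖ + 1) * (3 * (1 + (lam + 1)) * (1 + z)) ^ k := by
    rw [norm_mul, Complex.norm_real]
    gcongr
    exacts [norm_add_neg_one_pow_le u k, abs_pow_sub_one_mul_geg_le hlam hw hz k]
  rw [CfunR_eq_neg]
  exact (hasSum_mul_kernelCoeff hlam z hbound).neg

lemma half_sub_two_nonneg (hm : 2 ≤ m) : (0 : ℝ) ≤ (m - 2) / 2 :=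
  div_nonneg (sub_nonneg.mpr (by exact_mod_cast hm)) zero_le_two

lemma nrm_mul_nrm_sq (x y : Fin m → ℝ) : (nrm x * nrm y) ^ 2 = ip x x * ip y y := by
  rw [mul_pow, nrm_sq, nrm_sq]

lemma hasSum_Kminus (hm : 2 ≤ m) (x y : Fin m → ℝ) :
    HasSum (fun p : ℕ × ℕ => (kernelCoeff ((m - 2) / 2) p.1 p.2 * (ip x x * ip y y) ^ p.2) •
      kernelTerm (Complex.I ^ m) x y p.1) (Kminus m x y) := by
  have hlam := half_sub_two_nonneg hm
  have hw := abs_ip_div_le_one x y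
  have hz : 0 ≤ nrm x * nrm y := mul_nonneg (Real.sqrt_nonneg _) (Real.sqrt_nonneg _)
  have hterm := two_smul_kernelTerm (Complex.I ^ m) x y (nrm_mul_nrm_mul_ip_div x y)
    (nrm_mul_nrm_sq x y)
  rw [Kminus]
  have hsum := ((((hasSum_two_mul_AfunR (Complex.I ^ m) hlam hw hz).add
    (hasSum_two_mul_BfunR (Complex.I ^ m) hlam hw hz)).smul_const (1 : Cl m)).add
    (((hasSum_CfunR (Complex.I ^ m) hlam hw hz).mul_left 2).smul_const (wedge m x y))).const_smul
    (2⁻¹ : ℂ)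
  convert hsum using 1
  · ext1 p
    rw [← inv_smul_smul₀ (two_ne_zero (α := ℂ)) (kernelTerm _ x y p.1), hterm, ← nrm_mul_nrm_sq,
      ← ofReal_smul, smul_comm]
    congr 1
    module
  · module

end KernelExpansion

section Interchange

lemma isHomog_wedge_left (y : Fin m → ℝ) : IsHomog 1 fun x => wedge m x y := by
  have hneg : IsHomog 1 fun x => (-1 : ℝ) • (vec m y * vec m x) + (-1 : ℝ) • ip x y • (1 : Cl m) :=
    (((IsHomog.const (vec m y)).mul isHomog_vec).const_smul (-1)).add
      (((isHomog_ip y).smul (.const 1)).const_smul (-1))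
  convert hneg using 2 with x
  rw [wedge_eq_neg_vec_mul_vec_sub]
  module

lemma norm_kernelTerm_le (hm : 2 ≤ m) (u : ℂ) (x y : Fin m → ℝ) (k : ℕ) :
    ‖kernelTerm u x y k‖ ≤ (‖u‖ + 1) * (2 * ‖(1 : Cl m)‖ + ‖wedge m x y‖) *
      (3 * (1 + ((m - 2) / 2 + 1)) * (1 + nrm x * nrm y)) ^ k := by
  have hlam := half_sub_two_nonneg hm
  have hw := abs_ip_div_le_one x y
  have hz : 0 ≤ nrm x * nrm y := mul_nonneg (Real.sqrt_nonneg _) (Real.sqrt_nonneg _)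
  have hgeg := abs_pow_mul_geg_le (i := k) (n := k) hlam (lt_add_one _).le hw hz le_rfl le_rfl
  have hgegT := abs_pow_mul_gegT_le hlam hw hz k
  have hgegC := abs_pow_sub_one_mul_geg_le hlam hw hz k
  have htwo := congrArg norm (two_smul_kernelTerm u x y (nrm_mul_nrm_mul_ip_div x y)
    (nrm_mul_nrm_sq x y) k)
  have hadd := norm_add_neg_one_pow_le u k
  have hsub := norm_sub_neg_one_pow_le u k
  set T := (3 * (1 + (((m : ℝ) - 2) / 2 + 1)) * (1 + nrm x * nrm y)) ^ k
  have hT : 0 ≤ T := (abs_nonneg _).trans hgeg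
  have hone : 0 ≤ (‖u‖ + 1) * T * ‖(1 : Cl m)‖ := by positivity
  rw [norm_smul, RCLike.norm_ofNat] at htwo
  have hbound : 2 * ‖kernelTerm u x y k‖ ≤
      ((‖u‖ + 1) * T + (‖u‖ + 1) * (2 * T)) * ‖(1 : Cl m)‖ +
        (2 * (‖u‖ + 1) * T) * ‖wedge m x y‖ := by
    rw [htwo]
    refine (norm_sub_le _ _).trans ?_
    rw [norm_smul, norm_smul]
    gcongr
    · refine (norm_sub_le _ _).trans ?_
      rw [norm_mul, norm_mul, Complex.norm_real, Complex.norm_real]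
      gcongr <;> assumption
    · rw [norm_mul, norm_mul, RCLike.norm_ofNat, Complex.norm_real]
      gcongr
      assumption
  linarith

lemma integrable_gaussian_mul_exp_mul_exp_mul_cosh (b c r : ℝ) :
    Integrable fun x : Fin m → ℝ => gaussian x * Real.exp (b * nrm x) *
      (Real.exp (c * (1 + nrm x * r)) * Real.cosh (nrm x * r)) := by
  have hsplit (x : Fin m → ℝ) : gaussian x * Real.exp (b * nrm x) *
      (Real.exp (c * (1 + nrm x * r)) * Real.cosh (nrm x * r)) = Real.exp c / 2 *
        (gaussian x * Real.exp ((b + c * r + r) * nrm x)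
          + gaussian x * Real.exp ((b + c * r - r) * nrm x)) := by
    rw [Real.cosh_eq,
      show (b + c * r + r) * nrm x = b * nrm x + c * (nrm x * r) + nrm x * r by ring,
      show (b + c * r - r) * nrm x = b * nrm x + c * (nrm x * r) + -(nrm x * r) by ring]
    simp only [mul_add, mul_one, Real.exp_add]
    ring
  simp_rw [hsplit]
  exact ((integrable_gaussian_mul_exp _).add (integrable_gaussian_mul_exp _)).const_mul _

variable {f : (Fin m → ℝ) → Cl m}

lemma exists_norm_gaussian_smul_kernelCoeff_smul_le (hm : 2 ≤ m) {C : ℝ}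
    (hf : ∀ x, ‖f x‖ ≤ C * Real.exp (nrm x)) (u : ℂ) (y : Fin m → ℝ) :
    ∃ B, ∀ (p : ℕ × ℕ) (x : Fin m → ℝ),
      ‖gaussian x • (kernelCoeff ((m - 2) / 2) p.1 p.2 * (ip x x * ip y y) ^ p.2) •
        (kernelTerm u x y p.1 * f x)‖ ≤
      B * (gaussian x * Real.exp (2 * nrm x)) *
        ((3 * (1 + ((m - 2) / 2 + 1)) * (1 + nrm x * nrm y)) ^ p.1 / p.1.factorial *
          ((nrm x * nrm y) ^ (2 * p.2) / (2 * p.2).factorial)) := by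
  obtain ⟨C', hC'⟩ := (isHomog_wedge_left y).exists_norm_le_exp
  obtain ⟨N, hN, hmul⟩ := exists_norm_mul_le m
  refine ⟨2 ^ (((m : ℝ) - 2) / 2) * (N * ((‖u‖ + 1) * (2 * ‖(1 : Cl m)‖ + C')) * C),
    fun p x => ?_⟩
  have hlam := half_sub_two_nonneg hm
  have hgaussian : 0 ≤ gaussian x := (Real.exp_pos _).le
  have hz : 0 ≤ nrm x * nrm y := mul_nonneg (Real.sqrt_nonneg _) (Real.sqrt_nonneg _)
  have hexp : 1 ≤ Real.exp (nrm x) := Real.one_le_exp (Real.sqrt_nonneg _)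
  set T := 3 * (1 + (((m : ℝ) - 2) / 2 + 1)) * (1 + nrm x * nrm y)
  have hkernel : ‖kernelTerm u x y p.1‖ ≤
      (‖u‖ + 1) * ((2 * ‖(1 : Cl m)‖ + C') * Real.exp (nrm x)) * T ^ p.1 := by
    refine (norm_kernelTerm_le hm u x y p.1).trans ?_
    gcongr
    linarith [hC' x, mul_le_mul_of_nonneg_left hexp (norm_nonneg (1 : Cl m))]
  have hproduct : ‖kernelTerm u x y p.1 * f x‖ ≤ N *
      ((‖u‖ + 1) * ((2 * ‖(1 : Cl m)‖ + C') * Real.exp (nrm x)) * T ^ p.1) *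
        (C * Real.exp (nrm x)) :=
    (hmul _ _).trans (mul_le_mul (mul_le_mul_of_nonneg_left hkernel hN) (hf x) (norm_nonneg _)
      (mul_nonneg hN ((norm_nonneg _).trans hkernel)))
  rw [norm_smul, norm_smul, Real.norm_of_nonneg hgaussian, Real.norm_eq_abs, abs_mul,
    ← nrm_mul_nrm_sq, ← pow_mul, abs_of_nonneg (pow_nonneg hz _)]
  calc _ ≤ gaussian x * (2 ^ (((m : ℝ) - 2) / 2) * (1 / (p.1.factorial * (2 * p.2).factorial)) *
          (nrm x * nrm y) ^ (2 * p.2) * (N *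
      ((‖u‖ + 1) * ((2 * ‖(1 : Cl m)‖ + C') * Real.exp (nrm x)) * T ^ p.1) *
        (C * Real.exp (nrm x)))) := by
        gcongr
        exact abs_kernelCoeff_le hlam _ _
    _ = _ := by
        rw [two_mul (nrm x), Real.exp_add]
        field_simp

lemma hasSum_integral_gaussian_smul_Kminus_mul (hm : 2 ≤ m) (hcont : Continuous f) {C : ℝ}
    (hf : ∀ x, ‖f x‖ ≤ C * Real.exp (nrm x)) (y : Fin m → ℝ) :
    HasSum (fun p : ℕ × ℕ => ∫ x, gaussian x •
        (kernelCoeff ((m - 2) / 2) p.1 p.2 * (ip x x * ip y y) ^ p.2) •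
          (kernelTerm (Complex.I ^ m) x y p.1 * f x))
      (∫ x, gaussian x • (Kminus m x y * f x)) := by
  obtain ⟨B, hB⟩ := exists_norm_gaussian_smul_kernelCoeff_smul_le hm hf (Complex.I ^ m) y
  refine hasSum_integral_of_dominated_convergence _ (fun p => ?_)
    (fun p => .of_forall (hB p))
    (.of_forall fun x => (hasSum_exp_mul_cosh _ _).summable.mul_left _) ?_ (.of_forall fun x => ?_)
  · have hcoeff := (isHomog_ip_self (m := m)).contDiff.continuous
    have hkernel := (isHomog_kernelTerm (Complex.I ^ m) y p.1).contDiff.continuous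
    have hmul := (mulL m).continuous₂.comp (hkernel.prodMk hcont)
    exact (contDiff_gaussian.continuous.smul
      ((continuous_const.mul ((hcoeff.mul continuous_const).pow _)).smul hmul)).aestronglyMeasurable
  · simp_rw [tsum_mul_left, (hasSum_exp_mul_cosh _ _).tsum_eq, mul_assoc B]
    exact (integrable_gaussian_mul_exp_mul_exp_mul_cosh _ _ _).const_mul B
  · refine HasSum.const_smul (gaussian x) ?_
    simp_rw [← smul_mul_assoc]
    exact ((mulL m).flip (f x)).hasSum (hasSum_Kminus hm x y)

end Interchange

/-! ### Laguerre functions are eigenfunctions -/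

section Laguerre

lemma isHomog_ip_self_pow (n : ℕ) : IsHomog (2 * n) fun x : Fin m → ℝ => ip x x ^ n :=
  ⟨isHomog_ip_self.contDiff.pow n, fun c x => by
    simp only [isHomog_ip_self.apply_smul, smul_eq_mul, mul_pow, pow_mul]⟩

section VectorValued

variable {V : Type*} [NormedAddCommGroup V] [NormedSpace ℝ V] {d : ℕ} {f : (Fin m → ℝ) → V}

lemma lag_smul_eq_sum (a : ℝ) (j : ℕ) (t : ℝ) (v : V) : lag a j t • v =
    ∑ i ∈ Finset.range (j + 1), ((-1) ^ i * lagBinom a j i / i.factorial) • t ^ i • v := by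
  simp_rw [lag_eq_sum, Finset.sum_smul, mul_smul]

lemma IsHomog.continuous_lag_smul (hf : IsHomog d f) (a : ℝ) (j : ℕ) :
    Continuous fun x => lag a j (ip x x) • f x := by
  simp_rw [lag_smul_eq_sum]
  exact continuous_finsetSum _ fun i _ =>
    ((isHomog_ip_self_pow i).smul hf).contDiff.continuous.const_smul _

lemma IsHomog.exists_norm_lag_smul_le (hf : IsHomog d f) (a : ℝ) (j : ℕ) :
    ∃ C, ∀ x, ‖lag a j (ip x x) • f x‖ ≤ C * Real.exp (nrm x) := by
  choose C hC using fun i : ℕ =>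
    (((isHomog_ip_self_pow i).smul hf).const_smul
      ((-1) ^ i * lagBinom a j i / i.factorial)).exists_norm_le_exp
  refine ⟨∑ i ∈ Finset.range (j + 1), C i, fun x => ?_⟩
  rw [lag_smul_eq_sum, Finset.sum_mul]
  exact norm_sum_le_of_le _ fun i _ => hC i x

lemma integral_gaussian_smul_ip_self_pow_smul (hf : IsHomog d f) (n : ℕ) :
    ∫ x, gaussian x • ip x x ^ n • f x =
      (∏ r ∈ Finset.range n, ((m : ℝ) + d + 2 * r)) • ∫ x, gaussian x • f x := by
  induction n generalizing d f with
  | zero => simp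
  | succ n ih =>
    simp_rw [pow_succ, mul_smul]
    rw [ih (isHomog_ip_self.smul hf), integral_gaussian_smul_ip_self_smul hf, smul_smul,
      Finset.prod_range_succ']
    congr 2
    · refine Finset.prod_congr rfl fun r _ => ?_
      push_cast
      ring
    · simp

end VectorValued

lemma gaussianMoment_add (m k n : ℕ) : gaussianMoment m (k + n) =
    (∏ r ∈ Finset.range n, ((m : ℝ) + (k + k : ℕ) + 2 * r)) * gaussianMoment m k := by
  have hfactor (r : ℕ) : (m : ℝ) + (k + k : ℕ) + 2 * r = m + 2 * (k + r : ℕ) := by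
    push_cast
    ring
  simp_rw [hfactor]
  rw [gaussianMoment, gaussianMoment, Finset.prod_range_add]
  ring

lemma gaussianMoment_eq_Gamma (hm : 0 < m) (n : ℕ) :
    gaussianMoment m n = (2 * Real.pi) ^ ((m : ℝ) / 2) *
      (2 ^ n * (Real.Gamma (n + m / 2) / Real.Gamma (m / 2))) := by
  induction n with
  | zero =>
    rw [gaussianMoment_zero, pow_zero, Nat.cast_zero, zero_add, one_mul,
      div_self (Real.Gamma_pos_of_pos (by positivity)).ne', mul_one]
  | succ n ih =>
    rw [gaussianMoment_succ, ih, Nat.cast_succ, add_right_comm,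
      Real.Gamma_add_one (by positivity)]
    ring

lemma kernelCoeff_mul_gaussianMoment (hm : 2 ≤ m) (k s i : ℕ) :
    kernelCoeff ((m - 2) / 2) k s * gaussianMoment m (k + (s + i)) =
      (2 * Real.pi) ^ ((m : ℝ) / 2) * ((-1 / 2) ^ s / s.factorial * (2 ^ i *
        (Real.Gamma (s + i + (k + (m - 2) / 2) + 1) /
          Real.Gamma (s + (k + (m - 2) / 2) + 1)))) := by
  have hlam := half_sub_two_nonneg hm
  have hm' : (m : ℝ) / 2 = (m - 2) / 2 + 1 := by ring
  rw [gaussianMoment_eq_Gamma (by omega), hm', kernelCoeff, besselCoeff]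
  generalize ((m : ℝ) - 2) / 2 = lam at hlam
  have hΓ : Real.Gamma (lam + 1) ≠ 0 := (Real.Gamma_pos_of_pos (by positivity)).ne'
  have hΓs : Real.Gamma (s + (k + lam) + 1) ≠ 0 := (Real.Gamma_pos_of_pos (by positivity)).ne'
  have harg : ((k + (s + i) : ℕ) : ℝ) + (lam + 1) = s + i + (k + lam) + 1 := by
    push_cast
    ring
  have hquarter : (-1 / 4 : ℝ) ^ s * 2 ^ s = (-1 / 2) ^ s := by
    rw [← mul_pow]
    norm_num
  rw [harg, Real.rpow_add two_pos, Real.rpow_natCast, pow_add, pow_add, ← hquarter]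
  field_simp

/-- `f` is homogeneous of degree `κ` and, in Gaussian mean, the `k`-th term of the kernel
annihilates it for `k ≠ κ` and multiplies it by `ε` and a Gaussian moment for `k = κ`. -/
structure IsKernelEigenfunction (κ : ℕ) (ε : ℂ) (f : (Fin m → ℝ) → Cl m) : Prop
    extends IsHomog κ f where
  integral_kernelTerm_mul : ∀ y k, ∫ x, gaussian x • (kernelTerm (Complex.I ^ m) x y k * f x) =
    if k = κ then ε • gaussianMoment m κ • f y else 0

namespace IsMonogenic

variable {l : ℕ} {M : (Fin m → ℝ) → Cl m}

lemma isKernelEigenfunction (hm : 0 < m) (hM : IsMonogenic l M) :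
    IsKernelEigenfunction l ((-1) ^ l) M :=
  ⟨hM.toIsHomog, hM.integral_kernelTerm_mul hm _⟩

lemma isKernelEigenfunction_vec_mul (hm : 0 < m) (hM : IsMonogenic l M) :
    IsKernelEigenfunction (l + 1) (-Complex.I ^ m) fun x => vec m x * M x :=
  ⟨add_comm 1 l ▸ isHomog_vec.mul hM.toIsHomog, hM.integral_kernelTerm_mul_vec_mul hm _⟩

end IsMonogenic

namespace IsKernelEigenfunction

variable {κ : ℕ} {ε : ℂ} {f : (Fin m → ℝ) → Cl m}

lemma integral_ip_self_pow_smul_kernelTerm_mul (hf : IsKernelEigenfunction κ ε f)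
    (y : Fin m → ℝ) (k n : ℕ) :
    ∫ x, gaussian x • ip x x ^ n • (kernelTerm (Complex.I ^ m) x y k * f x) =
      if k = κ then ε • gaussianMoment m (κ + n) • f y else 0 := by
  rw [integral_gaussian_smul_ip_self_pow_smul ((isHomog_kernelTerm _ y k).mul hf.toIsHomog),
    hf.integral_kernelTerm_mul]
  split_ifs with hk
  · rw [hk, gaussianMoment_add, mul_smul, smul_comm ε (∏ _ ∈ _, _)]
  · rw [smul_zero]

lemma integral_kernelCoeff_smul_kernelTerm_mul_lag_smul (hm : 2 ≤ m)
    (hf : IsKernelEigenfunction κ ε f) (j : ℕ) (y : Fin m → ℝ) (k s : ℕ) :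
    ∫ x, gaussian x • (kernelCoeff ((m - 2) / 2) k s * (ip x x * ip y y) ^ s) •
        (kernelTerm (Complex.I ^ m) x y k * lag (κ + (m - 2) / 2) j (ip x x) • f x) =
      if k = κ then ((2 * Real.pi) ^ ((m : ℝ) / 2) * ((-ip y y / 2) ^ s / s.factorial *
        ∑ i ∈ Finset.range (j + 1), (-1) ^ i * lagBinom (κ + (m - 2) / 2) j i / i.factorial *
          (2 ^ i * (Real.Gamma (s + i + (κ + (m - 2) / 2) + 1) /
            Real.Gamma (s + (κ + (m - 2) / 2) + 1))))) • ε • f y else 0 := by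
  set c : ℕ → ℝ := fun i => (-1) ^ i * lagBinom (κ + (m - 2) / 2) j i / i.factorial
  have hexpand (x : Fin m → ℝ) :
      gaussian x • (kernelCoeff ((m - 2) / 2) k s * (ip x x * ip y y) ^ s) •
        (kernelTerm (Complex.I ^ m) x y k * lag (κ + (m - 2) / 2) j (ip x x) • f x) =
      ∑ i ∈ Finset.range (j + 1), (kernelCoeff ((m - 2) / 2) k s * ip y y ^ s * c i) •
        gaussian x • ip x x ^ (s + i) • (kernelTerm (Complex.I ^ m) x y k * f x) := by
    rw [mul_smul_comm, lag_smul_eq_sum, Finset.smul_sum, Finset.smul_sum]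
    refine Finset.sum_congr rfl fun i _ => ?_
    rw [mul_pow, pow_add]
    module
  have hint (i : ℕ) :=
    ((isHomog_ip_self_pow (s + i)).smul
      ((isHomog_kernelTerm (Complex.I ^ m) y k).mul hf.toIsHomog)).integrable
  simp_rw [hexpand]
  rw [integral_finsetSum _ fun i _ => (hint i).fun_smul _]
  simp_rw [integral_smul, hf.integral_ip_self_pow_smul_kernelTerm_mul]
  split_ifs with hk
  · rw [hk, Finset.mul_sum, Finset.mul_sum, Finset.sum_smul]
    refine Finset.sum_congr rfl fun i _ => ?_
    have hpow : (-ip y y / 2) ^ s = (-1 / 2) ^ s * ip y y ^ s := by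
      rw [← mul_pow]
      ring
    rw [smul_comm ε, smul_smul, hpow]
    congr 1
    linear_combination (ip y y ^ s * c i) * kernelCoeff_mul_gaussianMoment hm κ s i
  · simp

lemma integral_Kminus_mul_lag_smul (hm : 2 ≤ m) (hf : IsKernelEigenfunction κ ε f) (j : ℕ)
    (y : Fin m → ℝ) :
    ∫ x, gaussian x • (Kminus m x y * lag (κ + (m - 2) / 2) j (ip x x) • f x) =
      ((2 * Real.pi) ^ ((m : ℝ) / 2) *
        ((-1) ^ j * (lag (κ + (m - 2) / 2) j (ip y y) * Real.exp (-ip y y / 2)))) • ε • f y := by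
  have hlam := half_sub_two_nonneg hm
  obtain ⟨C, hC⟩ := hf.exists_norm_lag_smul_le (κ + (m - 2) / 2) j
  have hsum := hasSum_integral_gaussian_smul_Kminus_mul hm (hf.continuous_lag_smul _ j) hC y
  simp_rw [hf.integral_kernelCoeff_smul_kernelTerm_mul_lag_smul hm] at hsum
  have hinj : Function.Injective fun s : ℕ => (κ, s) := Prod.mk_right_injective κ
  rw [← hinj.hasSum_iff fun p hp => if_neg fun h => hp ⟨p.2, Prod.ext h.symm rfl⟩] at hsum
  simp only [Function.comp_def, if_true] at hsum
  have ha : (-1 : ℝ) < κ + (m - 2) / 2 := by linarith [κ.cast_nonneg (α := ℝ)]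
  exact hsum.unique (((hasSum_lag_hankel ha j (ip y y)).mul_left _).smul_const _)

lemma cliffordFourier_lag (hm : 2 ≤ m) (hf : IsKernelEigenfunction κ ε f) (j : ℕ) {a : ℝ}
    (ha : a = κ + (m - 2) / 2) (y : Fin m → ℝ) :
    ((2 * Real.pi) ^ (-(m : ℝ) / 2)) •
        (∫ x, Kminus m x y * ((lag a j (ip x x) * Real.exp (-(ip x x) / 2)) • f x)) =
      (ε * (-1) ^ j) • ((lag a j (ip y y) * Real.exp (-(ip y y) / 2)) • f y) := by
  have hcomm (x : Fin m → ℝ) :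
      Kminus m x y * ((lag a j (ip x x) * Real.exp (-(ip x x) / 2)) • f x) =
        gaussian x • (Kminus m x y * lag a j (ip x x) • f x) := by
    rw [mul_comm, mul_smul, mul_smul_comm, gaussian]
  have hpi : (2 * Real.pi) ^ (-(m : ℝ) / 2) * (2 * Real.pi) ^ ((m : ℝ) / 2) = 1 := by
    rw [← Real.rpow_add Real.two_pi_pos, neg_div, neg_add_cancel, Real.rpow_zero]
  simp_rw [hcomm]
  rw [ha, hf.integral_Kminus_mul_lag_smul hm, smul_smul, ← mul_assoc, hpi, one_mul, mul_smul,
    smul_comm _ ε, smul_comm _ ε, mul_smul, mul_smul ε, ← ofReal_smul ((-1) ^ j)]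
  push_cast
  rfl

end IsKernelEigenfunction

end Laguerre

end EigenfunctionProof

/-- The basis functions
`ψ_{2j,k}(x) = L_j^{m/2+k-1}(|x|²) M_k(x) e^{-|x|²/2}` and
`ψ_{2j+1,k}(x) = L_j^{m/2+k}(|x|²) x M_k(x) e^{-|x|²/2}`
are eigenfunctions of the Clifford-Fourier transform:
`F_- ψ_{2j,k} = (-1)^{j+k} ψ_{2j,k}` and `F_- ψ_{2j+1,k} = i^m (-1)^{j+1} ψ_{2j+1,k}`. -/
theorem clifford_fourier_eigenfunctions (m : ℕ) (hm : 2 ≤ m) (j k : ℕ)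
    (M : (Fin m → ℝ) → Cl m) (hM : ContDiff ℝ ⊤ M)
    (hhom : ∀ (c : ℝ) (x : Fin m → ℝ), M (c • x) = c^k • M x)
    (hmono : ∀ x, dirac M x = 0)
    (y : Fin m → ℝ) :
    ((2*Real.pi) ^ (-(m:ℝ)/2)) •
        (∫ x : Fin m → ℝ, Kminus m x y *
          ((lag ((m:ℝ)/2 + k - 1) j (ip x x) * Real.exp (-(ip x x)/2)) • M x))
      = ((-1 : ℝ)^(j + k)) •
          ((lag ((m:ℝ)/2 + k - 1) j (ip y y) * Real.exp (-(ip y y)/2)) • M y) ∧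
    ((2*Real.pi) ^ (-(m:ℝ)/2)) •
        (∫ x : Fin m → ℝ, Kminus m x y *
          ((lag ((m:ℝ)/2 + k) j (ip x x) * Real.exp (-(ip x x)/2)) • (vec m x * M x)))
      = (Complex.I^m * (-1 : ℂ)^(j + 1)) •
          ((lag ((m:ℝ)/2 + k) j (ip y y) * Real.exp (-(ip y y)/2)) • (vec m y * M y)) := by
  have hmono' : IsMonogenic k M := ⟨⟨hM.of_le le_top, hhom⟩, funext hmono⟩
  have hpos : 0 < m := by omega
  constructor
  · refine ((hmono'.isKernelEigenfunction hpos).cliffordFourier_lag hm j (by ring) y).trans ?_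
    rw [← pow_add, add_comm k j, ← ofReal_smul ((-1) ^ (j + k))]
    push_cast
    rfl
  · refine ((hmono'.isKernelEigenfunction_vec_mul hpos).cliffordFourier_lag hm j
      (by push_cast; ring) y).trans ?_
    rw [pow_succ]
    congr 1
    ring

end CliffordFourier
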